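/- arXiv:2009.04757 — 4 statements merged into one kernel-verified Lean document; each statement's English description precedes it below -/
import Mathlib

section
/- Multiplicative Orthogonality Criterion (Kátai; Bourgain–Sarnak–Ziegler): let (f_n)_{n≥1} be a bounded sequence of complex numbers. Assume there exists P_0 such that for all primes p ≠ q with p, q ≥ P_0, lim_{N→∞} (1/N) Σ_{n≤N} f_{pn} · conj(f_{qn}) = 0. Then for every multiplicative function u : ℕ → ℂ with |u(n)| ≤ 1 for all n, lim_{N→∞} (1/N) Σ_{n≤N} f_n u(n) = 0. -/
open Filter Topology

/-!
Let `P` be a finite set of primes and `A = ∑_{p ∈ P} 1/p`. By Turán–Kubilius, the number of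
`p ∈ P` dividing `n` is close to `A` for most `n ≤ N`, so `A ∑_{n ≤ N} u(n) f(n)` is close to
`∑_{p ∈ P} ∑_{m ≤ N/p} u(pm) f(pm)`, with an error `O(√A N)`. Replacing `u(pm)` by `u(p) u(m)`
costs `O(N ∑ 1/p²) = O(N)`. Cauchy–Schwarz in `m` then removes `u(m)` and leaves the
correlations of `f(pm)` with `f(qm)`: the diagonal `p = q` contributes `O(A N)` and, for fixed `P`,
the off-diagonal terms contribute `o(N)`. Altogether `|∑_{n ≤ N} u(n) f(n)| = O(N / √A)` for large
`N`, and `A` can be taken arbitrarily large since `∑ 1/p` diverges.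
-/

section

open Finset Asymptotics

section DivisorCount

/-- The number `ω_P(n)` of elements of `P` dividing `n`. For a finite set `P` of primes it is the
weight with which the sums over multiples of the `p ∈ P` are averaged. -/
def divisorCountIn (P : Finset ℕ) (n : ℕ) : ℕ := #{d ∈ P | d ∣ n}

/-- The sum `∑_{d ∈ P} 1 / d`: the mean value of `divisorCountIn P`, around which the
Turán–Kubilius inequality bounds its variance. -/
noncomputable def reciprocalSum (P : Finset ℕ) : ℝ := ∑ d ∈ P, 1 / (d : ℝ)

lemma reciprocalSum_nonneg (P : Finset ℕ) : 0 ≤ reciprocalSum P :=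
  sum_nonneg fun _ _ ↦ by positivity

lemma card_filter_dvd_Icc_one (N d : ℕ) : #{n ∈ Icc 1 N | d ∣ n} = N / d :=
  Nat.Ioc_filter_dvd_card_eq_div N d

lemma sum_filter_dvd_Icc_one {M : Type*} [AddCommMonoid M] (g : ℕ → M) (N d : ℕ) :
    ∑ n ∈ Icc 1 N with d ∣ n, g n = ∑ m ∈ Icc 1 (N / d), g (d * m) := by
  obtain rfl | hd := d.eq_zero_or_pos
  · rw [Nat.div_zero, filter_false_of_mem fun n hn ↦ ?_]
    · simp
    · rw [zero_dvd_iff]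
      exact Nat.one_le_iff_ne_zero.1 (mem_Icc.1 hn).1
  symm
  refine sum_nbij (d * ·) (fun m hm ↦ ?_) (fun _ _ _ _ h ↦ Nat.eq_of_mul_eq_mul_left hd h)
    (fun n hn ↦ ?_) fun _ _ ↦ rfl
  · simp only [mem_filter, mem_Icc, Nat.le_div_iff_mul_le hd] at hm ⊢
    exact ⟨⟨Nat.mul_pos hd hm.1, mul_comm m d ▸ hm.2⟩, dvd_mul_right d m⟩
  · simp only [coe_filter, mem_Icc, Set.mem_ofPred_eq] at hn
    obtain ⟨⟨hn₁, hnN⟩, m, rfl⟩ := hn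
    refine ⟨m, ?_, rfl⟩
    simp only [coe_Icc, Set.mem_Icc, Nat.le_div_iff_mul_le hd]
    exact ⟨Nat.pos_of_mul_pos_left hn₁, mul_comm d m ▸ hnN⟩

lemma sum_divisorCountIn_nsmul {M : Type*} [AddCommMonoid M] (P : Finset ℕ) (g : ℕ → M) (N : ℕ) :
    ∑ n ∈ Icc 1 N, divisorCountIn P n • g n = ∑ d ∈ P, ∑ m ∈ Icc 1 (N / d), g (d * m) := by
  simp_rw [divisorCountIn, card_filter, sum_smul, ite_smul, one_smul, zero_smul]
  rw [sum_comm]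
  simp_rw [← sum_filter, sum_filter_dvd_Icc_one]

lemma sum_divisorCountIn (P : Finset ℕ) (N : ℕ) :
    ∑ n ∈ Icc 1 N, divisorCountIn P n = ∑ d ∈ P, N / d := by
  simpa using sum_divisorCountIn_nsmul P (fun _ ↦ (1 : ℕ)) N

lemma sum_divisorCountIn_sq (P : Finset ℕ) (N : ℕ) :
    ∑ n ∈ Icc 1 N, divisorCountIn P n ^ 2 = ∑ d ∈ P, ∑ e ∈ P, N / d.lcm e := by
  simp_rw [divisorCountIn, card_filter, sq, sum_mul_sum, ite_zero_mul_ite_zero, one_mul,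
    ← Nat.lcm_dvd_iff]
  rw [sum_comm]
  refine sum_congr rfl fun d _ ↦ ?_
  rw [sum_comm]
  simp_rw [← card_filter, card_filter_dvd_Icc_one]

lemma mul_reciprocalSum_sub_card_le (P : Finset ℕ) (N : ℕ) :
    N * reciprocalSum P - #P ≤ ∑ n ∈ Icc 1 N, (divisorCountIn P n : ℝ) := by
  have floor_ge (d : ℕ) : (N : ℝ) * (1 / d) - 1 ≤ (N / d : ℕ) := by
    rw [mul_one_div, ← Nat.floor_div_eq_div (K := ℝ)]
    exact (Nat.sub_one_lt_floor _).le
  calc N * reciprocalSum P - #P = ∑ d ∈ P, ((N : ℝ) * (1 / d) - 1) := by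
        simp [reciprocalSum, mul_sum]
    _ ≤ ∑ d ∈ P, ((N / d : ℕ) : ℝ) := sum_le_sum fun d _ ↦ floor_ge d
    _ = _ := mod_cast (sum_divisorCountIn P N).symm

lemma sum_divisorCountIn_sq_le {P : Finset ℕ} (hP : (P : Set ℕ).Pairwise Nat.Coprime) (N : ℕ) :
    ∑ n ∈ Icc 1 N, (divisorCountIn P n : ℝ) ^ 2 ≤
      N * reciprocalSum P ^ 2 + N * reciprocalSum P := by
  have div_lcm_le (d) (hd : d ∈ P) (e) (he : e ∈ P) : ((N / d.lcm e : ℕ) : ℝ) ≤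
      N * (1 / d * (1 / e)) + if d = e then (N : ℝ) * (1 / d) else 0 := by
    refine Nat.cast_div_le.trans ?_
    split_ifs with h
    · rw [← h, Nat.lcm_self, mul_one_div (N : ℝ)]
      exact le_add_of_nonneg_left (by positivity)
    · rw [(hP hd he h).lcm_eq_mul, Nat.cast_mul, one_div_mul_one_div, mul_one_div, add_zero]
  calc ∑ n ∈ Icc 1 N, (divisorCountIn P n : ℝ) ^ 2
      = ∑ d ∈ P, ∑ e ∈ P, ((N / d.lcm e : ℕ) : ℝ) := mod_cast sum_divisorCountIn_sq P N
    _ ≤ ∑ d ∈ P, ∑ e ∈ P, (N * (1 / d * (1 / e)) + if d = e then (N : ℝ) * (1 / d) else 0) :=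
        sum_le_sum fun d hd ↦ sum_le_sum fun e he ↦ div_lcm_le d hd e he
    _ = N * reciprocalSum P ^ 2 + N * reciprocalSum P := by
        simp_rw [sum_add_distrib, ← mul_sum, ← sum_mul, sum_ite_eq, sum_ite_mem,
          inter_self, ← mul_sum, ← sq, reciprocalSum]

theorem turan_kubilius {P : Finset ℕ} (hP : (P : Set ℕ).Pairwise Nat.Coprime) (N : ℕ) :
    ∑ n ∈ Icc 1 N, (divisorCountIn P n - reciprocalSum P) ^ 2 ≤
      N * reciprocalSum P + 2 * reciprocalSum P * #P := by
  have expand : ∑ n ∈ Icc 1 N, (divisorCountIn P n - reciprocalSum P) ^ 2 =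
      ∑ n ∈ Icc 1 N, (divisorCountIn P n : ℝ) ^ 2
        - 2 * reciprocalSum P * ∑ n ∈ Icc 1 N, (divisorCountIn P n : ℝ)
        + N * reciprocalSum P ^ 2 := by
    simp only [sub_sq', sum_sub_distrib, sum_add_distrib, ← sum_mul, ← mul_sum, sum_const,
      Nat.card_Icc, add_tsub_cancel_right, nsmul_eq_mul]
    ring
  rw [expand]
  linarith [sum_divisorCountIn_sq_le hP N, mul_le_mul_of_nonneg_left
    (mul_reciprocalSum_sub_card_le P N) (reciprocalSum_nonneg P)]

lemma sum_abs_divisorCountIn_sub_le {P : Finset ℕ} (hP : (P : Set ℕ).Pairwise Nat.Coprime)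
    {N : ℕ} (hN : 2 * #P ≤ N) :
    ∑ n ∈ Icc 1 N, |divisorCountIn P n - reciprocalSum P| ≤ √(2 * reciprocalSum P) * N := by
  have hA := reciprocalSum_nonneg P
  have hN' : (2 : ℝ) * #P ≤ N := mod_cast hN
  refine le_of_sq_le_sq ?_ (by positivity)
  calc (∑ n ∈ Icc 1 N, |divisorCountIn P n - reciprocalSum P|) ^ 2
      ≤ N * ∑ n ∈ Icc 1 N, (divisorCountIn P n - reciprocalSum P) ^ 2 := by
        simpa using sq_sum_le_card_mul_sum_sq (s := Icc 1 N)
          (f := fun n ↦ |divisorCountIn P n - reciprocalSum P|)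
    _ ≤ N * (N * reciprocalSum P + 2 * reciprocalSum P * #P) := by
        gcongr; exact turan_kubilius hP N
    _ ≤ N * (2 * reciprocalSum P * N) := by
        gcongr; nlinarith
    _ = (√(2 * reciprocalSum P) * N) ^ 2 := by
        rw [mul_pow, Real.sq_sqrt (by positivity)]; ring

lemma reciprocalSum_mul_norm_sum_le {E : Type*} [SeminormedAddCommGroup E] [NormedSpace ℝ E]
    {P : Finset ℕ} (hP : (P : Set ℕ).Pairwise Nat.Coprime) {g : ℕ → E} {B : ℝ}
    (hg : ∀ n, ‖g n‖ ≤ B) {N : ℕ} (hN : 2 * #P ≤ N) :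
    reciprocalSum P * ‖∑ n ∈ Icc 1 N, g n‖ ≤
      ‖∑ d ∈ P, ∑ m ∈ Icc 1 (N / d), g (d * m)‖ + B * √(2 * reciprocalSum P) * N := by
  have hB : 0 ≤ B := (norm_nonneg _).trans (hg 0)
  have split : reciprocalSum P • ∑ n ∈ Icc 1 N, g n =
      ∑ d ∈ P, ∑ m ∈ Icc 1 (N / d), g (d * m) -
        ∑ n ∈ Icc 1 N, ((divisorCountIn P n : ℝ) - reciprocalSum P) • g n := by
    simp_rw [sub_smul, sum_sub_distrib, Nat.cast_smul_eq_nsmul, sum_divisorCountIn_nsmul,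
      smul_sum, sub_sub_cancel]
  have fluctuation : ‖∑ n ∈ Icc 1 N, ((divisorCountIn P n : ℝ) - reciprocalSum P) • g n‖ ≤
      B * √(2 * reciprocalSum P) * N :=
    calc _ ≤ ∑ n ∈ Icc 1 N, |divisorCountIn P n - reciprocalSum P| * B := by
          refine norm_sum_le_of_le _ fun n _ ↦ ?_
          rw [norm_smul, Real.norm_eq_abs]
          gcongr
          exact hg n
      _ ≤ √(2 * reciprocalSum P) * N * B := by
          rw [← sum_mul]; gcongr; exact sum_abs_divisorCountIn_sub_le hP hN
      _ = _ := by ring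
  rw [← norm_smul_of_nonneg (reciprocalSum_nonneg P), split]
  exact (norm_sub_le _ _).trans (by gcongr)

end DivisorCount

section Bilinear

variable {𝕜 E ι κ : Type*} [RCLike 𝕜] [SeminormedAddCommGroup E]

lemma sq_norm_sum_smul_le [NormedSpace 𝕜 E] {u : ι → 𝕜} {K : ℝ} (hu : ∀ i, ‖u i‖ ≤ K)
    (s : Finset ι) (g : ι → E) :
    ‖∑ i ∈ s, u i • g i‖ ^ 2 ≤ K ^ 2 * #s * ∑ i ∈ s, ‖g i‖ ^ 2 := by
  have norm_le : ‖∑ i ∈ s, u i • g i‖ ≤ K * ∑ i ∈ s, ‖g i‖ := by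
    rw [mul_sum]
    refine norm_sum_le_of_le _ fun i _ ↦ ?_
    rw [norm_smul]
    gcongr
    exact hu i
  calc ‖∑ i ∈ s, u i • g i‖ ^ 2 ≤ (K * ∑ i ∈ s, ‖g i‖) ^ 2 := by gcongr
    _ = K ^ 2 * (∑ i ∈ s, ‖g i‖) ^ 2 := mul_pow ..
    _ ≤ K ^ 2 * (#s * ∑ i ∈ s, ‖g i‖ ^ 2) := by gcongr; exact sq_sum_le_card_mul_sum_sq
    _ = K ^ 2 * #s * ∑ i ∈ s, ‖g i‖ ^ 2 := (mul_assoc ..).symm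

variable [InnerProductSpace 𝕜 E]

lemma sum_sq_norm_sum_smul_le {a : κ → 𝕜} {L : ℝ} (ha : ∀ k, ‖a k‖ ≤ L) (P : Finset κ)
    (s : Finset ι) (v : κ → ι → E) :
    ∑ i ∈ s, ‖∑ k ∈ P, a k • v k i‖ ^ 2 ≤
      L ^ 2 * ∑ k ∈ P, ∑ l ∈ P, ‖∑ i ∈ s, inner 𝕜 (v k i) (v l i)‖ := by
  have expand : ((∑ i ∈ s, ‖∑ k ∈ P, a k • v k i‖ ^ 2 : ℝ) : 𝕜) =
      ∑ k ∈ P, ∑ l ∈ P, (starRingEnd 𝕜 (a k) * a l) * ∑ i ∈ s, inner 𝕜 (v k i) (v l i) := by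
    push_cast
    simp_rw [← inner_self_eq_norm_sq_to_K, sum_inner, inner_sum, inner_smul_left,
      inner_smul_right, ← mul_assoc, mul_sum]
    rw [sum_comm]
    exact sum_congr rfl fun k _ ↦ sum_comm
  rw [← RCLike.norm_of_nonneg (K := 𝕜) (sum_nonneg fun _ _ ↦ sq_nonneg _), expand, mul_sum]
  refine norm_sum_le_of_le _ fun k _ ↦ ?_
  rw [mul_sum]
  refine norm_sum_le_of_le _ fun l _ ↦ ?_
  rw [norm_mul, norm_mul, RCLike.norm_conj, sq]
  gcongr
  · exact (norm_nonneg _).trans (ha k)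
  · exact ha k
  · exact ha l

lemma sq_norm_sum_smul_sum_smul_le [DecidableEq ι] {u : ι → 𝕜} {a : κ → 𝕜} {K L : ℝ}
    (hu : ∀ i, ‖u i‖ ≤ K) (ha : ∀ k, ‖a k‖ ≤ L) {P : Finset κ} {s : κ → Finset ι} {t : Finset ι}
    (hst : ∀ k ∈ P, s k ⊆ t) (v : κ → ι → E) :
    ‖∑ k ∈ P, a k • ∑ i ∈ s k, u i • v k i‖ ^ 2 ≤
      K ^ 2 * #t * (L ^ 2 * ∑ k ∈ P, ∑ l ∈ P, ‖∑ i ∈ s k ∩ s l, inner 𝕜 (v k i) (v l i)‖) := by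
  set w : κ → ι → E := fun k i ↦ if i ∈ s k then v k i else 0 with hw
  have extend : ∑ k ∈ P, a k • ∑ i ∈ s k, u i • v k i = ∑ i ∈ t, u i • ∑ k ∈ P, a k • w k i := by
    simp_rw [smul_sum]
    rw [sum_comm]
    refine sum_congr rfl fun k hk ↦ ?_
    rw [← inter_eq_right.2 (hst k hk), ← sum_ite_mem]
    refine sum_congr rfl fun i _ ↦ ?_
    rw [smul_comm, hw, smul_ite, smul_ite, smul_zero, smul_zero]
  have inner_extend (k) (hk : k ∈ P) (l : κ) :
      ∑ i ∈ t, inner 𝕜 (w k i) (w l i) = ∑ i ∈ s k ∩ s l, inner 𝕜 (v k i) (v l i) := by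
    rw [← inter_eq_right.2 (inter_subset_left.trans (hst k hk) : s k ∩ s l ⊆ t), ← sum_ite_mem]
    refine sum_congr rfl fun i _ ↦ ?_
    by_cases hi : i ∈ s k <;> by_cases hj : i ∈ s l <;> simp [hw, hi, hj]
  rw [extend]
  refine (sq_norm_sum_smul_le hu t _).trans ?_
  gcongr
  refine (sum_sq_norm_sum_smul_le ha P t w).trans_eq ?_
  congr 1
  exact sum_congr rfl fun k hk ↦ sum_congr rfl fun l _ ↦ by rw [inner_extend k hk l]

end Bilinear

section Average

variable {𝕜 E : Type*} [RCLike 𝕜] [SeminormedAddCommGroup E]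

lemma tendsto_one_div_smul_iff_isLittleO [NormedSpace 𝕜 E] {S : ℕ → E} :
    Tendsto (fun N : ℕ ↦ (1 / (N : 𝕜)) • S N) atTop (𝓝 0) ↔ S =o[atTop] fun N ↦ (N : ℝ) := by
  rw [← isLittleO_norm_left, isLittleO_iff_tendsto', tendsto_zero_iff_norm_tendsto_zero]
  · simp_rw [norm_smul, norm_div, norm_one, RCLike.norm_natCast, one_div_mul_eq_div]
  · filter_upwards [eventually_ne_atTop 0] with N hN h
    exact absurd (Nat.cast_eq_zero.1 h) hN

lemma isLittleO_comp_min_div_div {S : ℕ → E} (hS : S =o[atTop] fun N ↦ (N : ℝ)) {p q : ℕ}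
    (hp : p ≠ 0) (hq : q ≠ 0) :
    (fun N ↦ S (min (N / p) (N / q))) =o[atTop] fun N ↦ (N : ℝ) := by
  have min_tendsto : Tendsto (fun N ↦ min (N / p) (N / q)) atTop atTop :=
    tendsto_inf_atTop _ (Nat.tendsto_div_const_atTop hp) (Nat.tendsto_div_const_atTop hq)
  refine (hS.comp_tendsto min_tendsto).trans_isBigO (.of_norm_le fun N ↦ ?_)
  rw [Function.comp_apply, Real.norm_natCast]
  exact mod_cast (min_le_left _ _).trans (Nat.div_le_self N p)

end Average

section Katai

variable {𝕜 E : Type*} [RCLike 𝕜] [SeminormedAddCommGroup E]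

-- Multiplicativity at `d` can fail only at the multiples of `d`, which are rare enough for the
-- total error to be governed by the convergent sum `∑ 1 / n ^ 2`.
lemma norm_sum_smul_sub_smul_sum_le [NormedSpace 𝕜 E] {u : ℕ → 𝕜} {g : ℕ → E} {K C : ℝ}
    (hu : ∀ n, ‖u n‖ ≤ K) (hg : ∀ n, ‖g n‖ ≤ C) {d : ℕ}
    (hmul : ∀ m, ¬ d ∣ m → u (d * m) = u d * u m) (M : ℕ) :
    ‖∑ m ∈ Icc 1 M, u (d * m) • g m - u d • ∑ m ∈ Icc 1 M, u m • g m‖ ≤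
      (K + K * K) * C * (M / d : ℕ) := by
  have hK : 0 ≤ K := (norm_nonneg _).trans (hu 0)
  have norm_defect_le (m : ℕ) : ‖u (d * m) - u d * u m‖ ≤ if d ∣ m then K + K * K else 0 := by
    split_ifs with hdm
    · refine (norm_sub_le _ _).trans ?_
      rw [norm_mul]
      gcongr <;> apply hu
    · rw [hmul m hdm, sub_self, norm_zero]
  calc ‖∑ m ∈ Icc 1 M, u (d * m) • g m - u d • ∑ m ∈ Icc 1 M, u m • g m‖
      = ‖∑ m ∈ Icc 1 M, (u (d * m) - u d * u m) • g m‖ := by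
        simp_rw [smul_sum, ← sum_sub_distrib, sub_smul, mul_smul]
    _ ≤ ∑ m ∈ Icc 1 M, (if d ∣ m then K + K * K else 0) * C := by
        refine norm_sum_le_of_le _ fun m _ ↦ ?_
        rw [norm_smul]
        exact mul_le_mul (norm_defect_le m) (hg m) (norm_nonneg _)
          ((norm_nonneg _).trans (norm_defect_le m))
    _ = (K + K * K) * C * (M / d : ℕ) := by
        rw [← sum_mul, ← sum_filter, sum_const, card_filter_dvd_Icc_one, nsmul_eq_mul]
        ring

lemma norm_sum_dilate_sub_bilinear_le [NormedSpace 𝕜 E] {u : ℕ → 𝕜} {f : ℕ → E} {K C : ℝ}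
    (hu : ∀ n, ‖u n‖ ≤ K) (hf : ∀ n, ‖f n‖ ≤ C) {P : Finset ℕ}
    (hmul : ∀ d ∈ P, ∀ m, ¬ d ∣ m → u (d * m) = u d * u m) (N : ℕ) :
    ‖∑ d ∈ P, ∑ m ∈ Icc 1 (N / d), u (d * m) • f (d * m) -
        ∑ d ∈ P, u d • ∑ m ∈ Icc 1 (N / d), u m • f (d * m)‖ ≤
      (K + K * K) * C * (∑' n : ℕ, 1 / (n : ℝ) ^ 2) * N := by
  have hK : 0 ≤ K := (norm_nonneg _).trans (hu 0)
  have hC : 0 ≤ C := (norm_nonneg _).trans (hf 0)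
  have div_div_le (d : ℕ) : ((N / d / d : ℕ) : ℝ) ≤ 1 / (d : ℝ) ^ 2 * N := by
    rw [Nat.div_div_eq_div_mul, ← sq, one_div_mul_eq_div]
    exact mod_cast Nat.cast_div_le (α := ℝ) (m := N) (n := d ^ 2)
  rw [← sum_sub_distrib]
  calc _ ≤ ∑ d ∈ P, (K + K * K) * C * (1 / (d : ℝ) ^ 2 * N) :=
        norm_sum_le_of_le _ fun d hd ↦
          (norm_sum_smul_sub_smul_sum_le hu (fun m ↦ hf (d * m)) (hmul d hd) _).trans
            (by gcongr; exact div_div_le d)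
    _ = (K + K * K) * C * (∑ d ∈ P, 1 / (d : ℝ) ^ 2) * N := by
        rw [← mul_sum, ← sum_mul, mul_assoc _ _ (N : ℝ)]
    _ ≤ _ := by
        gcongr
        exact (Real.summable_one_div_nat_pow.2 one_lt_two).sum_le_tsum P fun _ _ ↦ by positivity

variable [InnerProductSpace 𝕜 E] {u : ℕ → 𝕜} {f : ℕ → E} {K C : ℝ} {P : Finset ℕ}

lemma sum_norm_correlation_self_le (hf : ∀ n, ‖f n‖ ≤ C) (P : Finset ℕ) (N : ℕ) :
    ∑ p ∈ P, ‖∑ m ∈ Icc 1 (N / p), inner 𝕜 (f (p * m)) (f (p * m))‖ ≤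
      C ^ 2 * reciprocalSum P * N := by
  rw [reciprocalSum, mul_sum, sum_mul]
  refine sum_le_sum fun p _ ↦ ?_
  calc _ ≤ ∑ _m ∈ Icc 1 (N / p), C ^ 2 := by
        refine norm_sum_le_of_le _ fun m _ ↦ (norm_inner_le_norm _ _).trans ?_
        rw [← sq]
        gcongr
        exact hf _
    _ = C ^ 2 * (N / p : ℕ) := by
        rw [sum_const, Nat.card_Icc, add_tsub_cancel_right, nsmul_eq_mul, mul_comm]
    _ ≤ C ^ 2 * (N / p) := by gcongr; exact Nat.cast_div_le
    _ = C ^ 2 * (1 / p) * N := by ring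

lemma eventually_sum_norm_correlation_le (hf : ∀ n, ‖f n‖ ≤ C) (hP : ∀ p ∈ P, p ≠ 0)
    (hA : 0 < reciprocalSum P)
    (hcross : (P : Set ℕ).Pairwise fun p q ↦
      (fun N : ℕ ↦ ∑ n ∈ Icc 1 N, inner 𝕜 (f (p * n)) (f (q * n))) =o[atTop] fun N ↦ (N : ℝ)) :
    ∀ᶠ N : ℕ in atTop, ∑ p ∈ P, ∑ q ∈ P,
      ‖∑ m ∈ Icc 1 (N / p) ∩ Icc 1 (N / q), inner 𝕜 (f (p * m)) (f (q * m))‖ ≤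
        (C ^ 2 + 1) * reciprocalSum P * N := by
  have inter_eq (a b : ℕ) : Icc 1 a ∩ Icc 1 b = Icc 1 (min a b) := by
    ext m
    simp only [mem_inter, mem_Icc]
    lia
  have offDiag : (fun N : ℕ ↦ ∑ p ∈ P, ∑ q ∈ P.erase p,
      ‖∑ m ∈ Icc 1 (N / p) ∩ Icc 1 (N / q), inner 𝕜 (f (p * m)) (f (q * m))‖)
        =o[atTop] fun N ↦ (N : ℝ) := by
    refine .fun_sum fun p hp ↦ .fun_sum fun q hq ↦ ?_
    have hq' := mem_of_mem_erase hq
    simp_rw [inter_eq]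
    exact (isLittleO_comp_min_div_div (hcross hp hq' (ne_of_mem_erase hq).symm)
      (hP p hp) (hP q hq')).norm_left
  filter_upwards [offDiag.bound hA] with N hN
  rw [Real.norm_natCast] at hN
  calc _ = ∑ p ∈ P, ‖∑ m ∈ Icc 1 (N / p), inner 𝕜 (f (p * m)) (f (p * m))‖ + ∑ p ∈ P,
        ∑ q ∈ P.erase p,
          ‖∑ m ∈ Icc 1 (N / p) ∩ Icc 1 (N / q), inner 𝕜 (f (p * m)) (f (q * m))‖ := by
        rw [← sum_add_distrib]
        refine sum_congr rfl fun p hp ↦ ?_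
        rw [← add_sum_erase P _ hp, inter_self]
    _ ≤ C ^ 2 * reciprocalSum P * N + reciprocalSum P * N :=
        add_le_add (sum_norm_correlation_self_le hf P N) ((Real.le_norm_self _).trans hN)
    _ = _ := by ring

lemma eventually_norm_bilinear_le {a : ℕ → 𝕜} {L : ℝ} (hu : ∀ n, ‖u n‖ ≤ K)
    (ha : ∀ n, ‖a n‖ ≤ L) (hf : ∀ n, ‖f n‖ ≤ C) (hP : ∀ p ∈ P, p ≠ 0) (hA : 0 < reciprocalSum P)
    (hcross : (P : Set ℕ).Pairwise fun p q ↦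
      (fun N : ℕ ↦ ∑ n ∈ Icc 1 N, inner 𝕜 (f (p * n)) (f (q * n))) =o[atTop] fun N ↦ (N : ℝ)) :
    ∀ᶠ N : ℕ in atTop, ‖∑ p ∈ P, a p • ∑ m ∈ Icc 1 (N / p), u m • f (p * m)‖ ≤
      K * L * √((C ^ 2 + 1) * reciprocalSum P) * N := by
  have hK : 0 ≤ K := (norm_nonneg _).trans (hu 0)
  have hL : 0 ≤ L := (norm_nonneg _).trans (ha 0)
  filter_upwards [eventually_sum_norm_correlation_le hf hP hA hcross] with N hN
  refine le_of_sq_le_sq ?_ (by positivity)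
  calc _ ≤ K ^ 2 * #(Icc 1 N) * (L ^ 2 * ∑ p ∈ P, ∑ q ∈ P,
          ‖∑ m ∈ Icc 1 (N / p) ∩ Icc 1 (N / q), inner 𝕜 (f (p * m)) (f (q * m))‖) :=
        sq_norm_sum_smul_sum_smul_le hu ha
          (fun p _ ↦ Icc_subset_Icc_right (Nat.div_le_self N p)) fun p m ↦ f (p * m)
    _ ≤ K ^ 2 * N * (L ^ 2 * ((C ^ 2 + 1) * reciprocalSum P * N)) := by
        rw [Nat.card_Icc, add_tsub_cancel_right]
        gcongr
    _ = _ := by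
        rw [mul_pow, mul_pow, Real.sq_sqrt (by positivity)]
        ring

lemma eventually_sqrt_reciprocalSum_mul_norm_sum_le (hu : ∀ n, ‖u n‖ ≤ K) (hf : ∀ n, ‖f n‖ ≤ C)
    (hP : ∀ p ∈ P, p.Prime) (hA : 1 ≤ reciprocalSum P)
    (hmul : ∀ p ∈ P, ∀ m, ¬ p ∣ m → u (p * m) = u p * u m)
    (hcross : (P : Set ℕ).Pairwise fun p q ↦
      (fun N : ℕ ↦ ∑ n ∈ Icc 1 N, inner 𝕜 (f (p * n)) (f (q * n))) =o[atTop] fun N ↦ (N : ℝ)) :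
    ∀ᶠ N : ℕ in atTop, √(reciprocalSum P) * ‖∑ n ∈ Icc 1 N, u n • f n‖ ≤
      (K * C * √2 + (K + K * K) * C * (∑' n : ℕ, 1 / (n : ℝ) ^ 2) + K * K * √(C ^ 2 + 1)) * N := by
  let : NormedSpace ℝ E := .restrictScalars ℝ 𝕜 E
  have hK : 0 ≤ K := (norm_nonneg _).trans (hu 0)
  have hC : 0 ≤ C := (norm_nonneg _).trans (hf 0)
  have norm_smul_le (n : ℕ) : ‖u n • f n‖ ≤ K * C := by
    rw [norm_smul]
    gcongr <;> [exact hu n; exact hf n]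
  have coprime : (P : Set ℕ).Pairwise Nat.Coprime := fun p hp q hq hpq ↦
    (Nat.coprime_primes (hP p hp) (hP q hq)).2 hpq
  set A := reciprocalSum P
  have hA₀ : 0 < A := one_pos.trans_le hA
  filter_upwards [eventually_norm_bilinear_le hu hu hf (fun p hp ↦ (hP p hp).ne_zero) hA₀ hcross,
    eventually_ge_atTop (2 * #P)] with N bilinear_le hN
  set D := ∑' n : ℕ, 1 / (n : ℝ) ^ 2
  have hD : 0 ≤ D := tsum_nonneg fun _ ↦ by positivity
  refine le_of_mul_le_mul_left ?_ (Real.sqrt_pos.2 hA₀)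
  calc √A * (√A * ‖∑ n ∈ Icc 1 N, u n • f n‖) = A * ‖∑ n ∈ Icc 1 N, u n • f n‖ := by
        rw [← mul_assoc, Real.mul_self_sqrt hA₀.le]
    _ ≤ ‖∑ p ∈ P, ∑ m ∈ Icc 1 (N / p), u (p * m) • f (p * m)‖ + K * C * √(2 * A) * N :=
        reciprocalSum_mul_norm_sum_le coprime norm_smul_le hN
    _ ≤ (K + K * K) * C * D * N + K * K * √((C ^ 2 + 1) * A) * N + K * C * √(2 * A) * N := by
        gcongr
        exact (norm_le_norm_sub_add _ _).trans
          (add_le_add (norm_sum_dilate_sub_bilinear_le hu hf hmul N) bilinear_le)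
    _ ≤ (K + K * K) * C * (D * √A) * N + K * K * √((C ^ 2 + 1) * A) * N
          + K * C * √(2 * A) * N := by
        gcongr
        exact le_mul_of_one_le_right hD (Real.one_le_sqrt.2 hA)
    _ = _ := by
        rw [Real.sqrt_mul (by positivity), Real.sqrt_mul zero_le_two]
        ring

end Katai

section LargePrimes

lemma exists_finset_subset_le_reciprocalSum {S : Set ℕ}
    (hS : ¬ Summable (S.indicator fun n : ℕ ↦ 1 / (n : ℝ))) (B : ℝ) :
    ∃ P : Finset ℕ, (P : Set ℕ) ⊆ S ∧ B ≤ reciprocalSum P := by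
  classical
  by_contra! h
  refine hS (summable_of_sum_le (c := B) (Set.indicator_nonneg fun _ _ ↦ by positivity) fun T ↦ ?_)
  exact (sum_indicator_eq_sum_filter T (fun _ (n : ℕ) ↦ 1 / (n : ℝ)) (fun _ ↦ S) id).trans_le
    (h {n ∈ T | n ∈ S} fun n hn ↦ (mem_filter.1 hn).2).le

lemma not_summable_one_div_on_primes_ge (P₀ : ℕ) :
    ¬ Summable ({p | p.Prime ∧ P₀ ≤ p}.indicator fun n : ℕ ↦ 1 / (n : ℝ)) := by
  refine fun h ↦ not_summable_one_div_on_primes ((summable_congr_cofinite ?_).1 h)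
  rw [Nat.cofinite_eq_atTop]
  filter_upwards [eventually_ge_atTop P₀] with n hn
  simp [Set.indicator_apply, hn]

end LargePrimes

theorem multiplicative_orthogonality_criterion_general {𝕜 E : Type*} [RCLike 𝕜]
    [SeminormedAddCommGroup E] [InnerProductSpace 𝕜 E] {S : Set ℕ} (hS : ∀ p ∈ S, p.Prime)
    (hS_recip : ¬ Summable (S.indicator fun n : ℕ ↦ 1 / (n : ℝ)))
    {f : ℕ → E} {C : ℝ} (hf : ∀ n, ‖f n‖ ≤ C)
    (hcross : S.Pairwise fun p q ↦ Tendsto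
      (fun N : ℕ ↦ (1 / (N : 𝕜)) * ∑ n ∈ Icc 1 N, inner 𝕜 (f (p * n)) (f (q * n))) atTop (𝓝 0))
    {u : ℕ → 𝕜} {K : ℝ} (hu : ∀ n, ‖u n‖ ≤ K)
    (hmul : ∀ p ∈ S, ∀ m, p.Coprime m → u (p * m) = u p * u m) :
    Tendsto (fun N : ℕ ↦ (1 / (N : 𝕜)) • ∑ n ∈ Icc 1 N, u n • f n) atTop (𝓝 0) := by
  rw [tendsto_one_div_smul_iff_isLittleO, isLittleO_iff]
  intro ε hε
  set c := K * C * √2 + (K + K * K) * C * (∑' n : ℕ, 1 / (n : ℝ) ^ 2) + K * K * √(C ^ 2 + 1)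
  obtain ⟨P, hPS, hP⟩ := exists_finset_subset_le_reciprocalSum hS_recip (max 1 ((c / ε) ^ 2))
  have one_le : 1 ≤ reciprocalSum P := (le_max_left _ _).trans hP
  have le_sqrt : c ≤ √(reciprocalSum P) * ε :=
    (div_le_iff₀ hε).1 (Real.le_sqrt_of_sq_le ((le_max_right _ _).trans hP))
  filter_upwards [eventually_sqrt_reciprocalSum_mul_norm_sum_le hu hf (fun p hp ↦ hS p (hPS hp))
    one_le (fun p hp m hpm ↦ hmul p (hPS hp) m (((hS p (hPS hp)).coprime_iff_not_dvd).2 hpm))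
    ((hcross.mono hPS).imp fun _ _ ↦ (tendsto_one_div_smul_iff_isLittleO (𝕜 := 𝕜)).1)] with N hN
  rw [Real.norm_natCast]
  refine le_of_mul_le_mul_left ?_ (Real.sqrt_pos.2 (one_pos.trans_le one_le))
  calc √(reciprocalSum P) * ‖∑ n ∈ Icc 1 N, u n • f n‖ ≤ c * N := hN
    _ ≤ √(reciprocalSum P) * ε * N := by gcongr
    _ = √(reciprocalSum P) * (ε * N) := mul_assoc ..

end

/-- Multiplicative Orthogonality Criterion (Kátai; Bourgain–Sarnak–Ziegler): if
`(f_n)` is a bounded sequence of complex numbers such that for all sufficiently large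
distinct primes `p, q` one has `(1/N) Σ_{n≤N} f_{pn} conj(f_{qn}) → 0`, then for every
multiplicative function `u : ℕ → ℂ` bounded by `1`,
`(1/N) Σ_{n≤N} f_n u(n) → 0`. -/
theorem multiplicative_orthogonality_criterion (f : ℕ → ℂ) (C : ℝ)
    (hbd : ∀ n : ℕ, ‖f n‖ ≤ C)
    (hcross : ∃ P0 : ℕ, ∀ p q : ℕ, p.Prime → q.Prime → p ≠ q → P0 ≤ p → P0 ≤ q →
      Tendsto
        (fun N : ℕ => (1 / (N : ℂ)) *
          ∑ n ∈ Finset.Icc 1 N, f (p * n) * (starRingEnd ℂ) (f (q * n)))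
        atTop (nhds 0)) :
    ∀ u : ℕ → ℂ, u 1 = 1 →
      (∀ m n : ℕ, Nat.Coprime m n → u (m * n) = u m * u n) →
      (∀ n : ℕ, ‖u n‖ ≤ 1) →
      Tendsto (fun N : ℕ => (1 / (N : ℂ)) * ∑ n ∈ Finset.Icc 1 N, f n * u n)
        atTop (nhds 0) := by
  obtain ⟨P₀, hcross⟩ := hcross
  intro u _ hmul hu
  simpa only [smul_eq_mul, mul_comm] using multiplicative_orthogonality_criterion_general
    (fun _ hp ↦ hp.1) (not_summable_one_div_on_primes_ge P₀) hbd
    (fun p hp q hq hpq ↦ hcross q p hq.1 hp.1 hpq.symm hq.2 hp.2) hu fun p _ m ↦ hmul p m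
end

section
/- The Chowla conjecture implies Sarnak's conjecture: if lim_{N→∞} (1/N) Σ_{n≤N} μ^{j_0}(n+k_0) μ^{j_1}(n+k_1)⋯μ^{j_r}(n+k_r) = 0 whenever r ≥ 0, 0 ≤ k_0 < k_1 < ... < k_r are integers and j_0,...,j_r ∈ {1,2} are not all equal to 2, then every topological dynamical system (T,X) with h_top(T,X) = 0 is Möbius orthogonal. -/
open Filter Topology

open scoped BigOperators

/-!
A continuous observable along an orbit of a zero-entropy system is a sequence of zero entropy, so
let `a` be a real such sequence and `u` a `{-1, 0, 1}`-valued sequence with the Chowla property.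
Cover the windows `(a (n + k))_{k < L}`, `n ∈ ℕ`, up to `ε` by `exp (δ L)` of them, say those
starting at `m ∈ s`. Expanding `exp (c u) = 1 + (cosh c - 1) u ^ 2 + sinh c * u` in every factor,
the Chowla property kills each product containing some `u (n + k)` to the first power, so each
correlation `X_m(n) = ∑_{k < L} λ a (m + k) u (n + k)` is asymptotically sub-Gaussian with variance
proxy `λ ^ 2 L M ^ 2`, where `M` bounds `|a|`. Hence the average over `n` of `max_{m ∈ s} X_m(n)`
is at most `δ L + λ ^ 2 L M ^ 2`, a small multiple of `λ L` if first `λ` and then `δ` is chosen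
small. Since `λ ∑_{k < L} a (n + k) u (n + k)` is within `λ ε L` of one of the `X_m(n)`, the
averages of `a n * u n` are asymptotically at most `0`, and those of `-a n * u n` likewise.
-/

section Averages

lemma expect_Icc_one_eq {K : Type*} [Field K] [CharZero K] (g : ℕ → K) (N : ℕ) :
    𝔼 n ∈ Finset.Icc 1 N, g n = 1 / (N : K) * ∑ n ∈ Finset.Icc 1 N, g n := by
  rw [Finset.expect_eq_sum_div_card, Nat.card_Icc, Nat.add_sub_cancel, one_div_mul_eq_div]

lemma sum_Icc_one_succ_sub {G : Type*} [AddCommGroup G] (b : ℕ → G) (N : ℕ) :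
    ∑ n ∈ Finset.Icc 1 N, (b (n + 1) - b n) = b (N + 1) - b 1 := by
  induction N with
  | zero => simp
  | succ N ih => rw [Finset.sum_Icc_succ_top (by lia), ih]; abel

variable {b : ℕ → ℝ} {M : ℝ}

lemma tendsto_expect_Icc_one_succ_sub (hb : ∀ n, |b n| ≤ M) :
    Tendsto (fun N ↦ 𝔼 n ∈ Finset.Icc 1 N, (b (n + 1) - b n)) atTop (𝓝 0) := by
  simp only [expect_Icc_one_eq, sum_Icc_one_succ_sub]
  refine tendsto_one_div_atTop_nhds_zero_nat.zero_mul_isBoundedUnder_le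
    (isBoundedUnder_of ⟨M + M, fun N ↦ ?_⟩)
  exact (abs_sub _ _).trans (add_le_add (hb _) (hb _))

lemma tendsto_expect_Icc_one_add_sub (hb : ∀ n, |b n| ≤ M) (k : ℕ) :
    Tendsto (fun N ↦ 𝔼 n ∈ Finset.Icc 1 N, (b (n + k) - b n)) atTop (𝓝 0) := by
  induction k with
  | zero => simp
  | succ k ih =>
    have step := tendsto_expect_Icc_one_succ_sub (b := fun n ↦ b (n + k)) fun n ↦ hb _
    have total := step.add ih
    rw [add_zero] at total
    refine total.congr fun N ↦ ?_
    rw [← Finset.expect_add_distrib]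
    exact Finset.expect_congr rfl fun n _ ↦ by rw [add_right_comm n 1 k, ← add_assoc n k 1]; ring

lemma tendsto_expect_Icc_one_block_sub (hb : ∀ n, |b n| ≤ M) (L : ℕ) :
    Tendsto (fun N ↦ 𝔼 n ∈ Finset.Icc 1 N, ∑ k ∈ Finset.range L, b (n + k) -
      L * 𝔼 n ∈ Finset.Icc 1 N, b n) atTop (𝓝 0) := by
  have total := tendsto_finsetSum (Finset.range L)
    fun k _ ↦ tendsto_expect_Icc_one_add_sub hb k
  rw [Finset.sum_const_zero] at total
  refine total.congr fun N ↦ ?_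
  simp only [Finset.expect_sub_distrib, Finset.sum_sub_distrib, Finset.sum_const,
    Finset.card_range, nsmul_eq_mul, Finset.expect_sum_comm]

lemma eventually_expect_Icc_one_le_of_block (hb : ∀ n, |b n| ≤ M) {L : ℕ} (hL : 0 < L)
    {ε ε' : ℝ} (hε : ε < ε')
    (hblock : ∀ᶠ N in atTop,
      𝔼 n ∈ Finset.Icc 1 N, ∑ k ∈ Finset.range L, b (n + k) ≤ L * ε) :
    ∀ᶠ N in atTop, 𝔼 n ∈ Finset.Icc 1 N, b n ≤ ε' := by
  have hL' : (0 : ℝ) < L := Nat.cast_pos.2 hL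
  have hneg : L * (ε - ε') < 0 := mul_neg_of_pos_of_neg hL' (sub_neg.2 hε)
  filter_upwards [hblock, (tendsto_expect_Icc_one_block_sub hb L).eventually_const_lt hneg]
    with N hN hsub
  refine le_of_mul_le_mul_left ?_ hL'
  linarith

end Averages

section FiniteMaximalInequality

lemma expect_le_add_of_expect_exp_le {ι κ : Type*} {A : Finset ι} (hA : A.Nonempty) {s : Finset κ}
    {Y : ι → ℝ} {X : κ → ι → ℝ} (hYX : ∀ i ∈ A, ∃ m ∈ s, Y i ≤ X m i) {α β : ℝ}
    (hs : (s.card : ℝ) ≤ Real.exp α) (hX : ∀ m ∈ s, 𝔼 i ∈ A, Real.exp (X m i) ≤ Real.exp β) :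
    𝔼 i ∈ A, Y i ≤ α + β := by
  have tangent (i : ι) (hi : i ∈ A) :
      Y i ≤ (α + β - 1) + Real.exp (-(α + β)) * ∑ m ∈ s, Real.exp (X m i) := by
    obtain ⟨m, hm, hYm⟩ := hYX i hi
    calc Y i ≤ (α + β - 1) + Real.exp (-(α + β) + X m i) := by
            linarith [Real.add_one_le_exp (-(α + β) + X m i)]
      _ ≤ _ := by
            rw [Real.exp_add]
            gcongr
            exact Finset.single_le_sum (f := fun m ↦ Real.exp (X m i))
              (fun _ _ ↦ (Real.exp_pos _).le) hm
  have total : ∑ m ∈ s, 𝔼 i ∈ A, Real.exp (X m i) ≤ Real.exp (α + β) :=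
    calc _ ≤ s.card * Real.exp β := by
            rw [← nsmul_eq_mul]; exact Finset.sum_le_card_nsmul _ _ _ hX
      _ ≤ Real.exp (α + β) := by rw [Real.exp_add]; gcongr
  calc 𝔼 i ∈ A, Y i
      ≤ 𝔼 i ∈ A, ((α + β - 1) + Real.exp (-(α + β)) * ∑ m ∈ s, Real.exp (X m i)) :=
        Finset.expect_le_expect tangent
    _ = (α + β - 1) + Real.exp (-(α + β)) * ∑ m ∈ s, 𝔼 i ∈ A, Real.exp (X m i) := by
        rw [Finset.expect_add_distrib, Finset.expect_const hA, ← Finset.mul_expect,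
          Finset.expect_sum_comm]
    _ ≤ (α + β - 1) + Real.exp (-(α + β)) * Real.exp (α + β) := by gcongr
    _ = α + β := by rw [← Real.exp_add]; simp

end FiniteMaximalInequality

/-- The conclusion of the Chowla conjecture for an integer sequence `u` in place of `μ`: every
correlation `u ^ {j 0} (n + k 0) ⋯ u ^ {j r} (n + k r)` with exponents in `{1, 2}`, not all equal
to `2`, has mean zero. -/
def ChowlaProperty (u : ℕ → ℤ) : Prop :=
  ∀ (r : ℕ) (k : Fin (r + 1) → ℕ), StrictMono k →
    ∀ j : Fin (r + 1) → ℕ, (∀ i, j i = 1 ∨ j i = 2) → (∃ i, j i = 1) →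
      Tendsto
        (fun N : ℕ ↦ (1 / (N : ℝ)) * ∑ n ∈ Finset.Icc 1 N, ∏ i, ((u (n + k i) : ℤ) : ℝ) ^ (j i))
        atTop (𝓝 0)

section ExponentialMoments

lemma one_add_cosh_sub_one_mul_sq_le_exp {x : ℝ} (hx : |x| ≤ 1) (t : ℝ) :
    1 + (Real.cosh t - 1) * x ^ 2 ≤ Real.exp (t ^ 2 / 2) := by
  have hx2 : x ^ 2 ≤ 1 := (sq_le_one_iff_abs_le_one x).2 hx
  have := mul_le_of_le_one_right (sub_nonneg.2 (Real.one_le_cosh t)) hx2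
  linarith [Real.cosh_le_exp_half_sq t]

lemma exp_mul_intCast_eq {m : ℤ} (hm : |m| ≤ 1) (t : ℝ) :
    Real.exp (t * m) = Real.sinh t * m + (1 + (Real.cosh t - 1) * (m : ℝ) ^ 2) := by
  rcases Int.abs_le_one_iff.1 hm with rfl | rfl | rfl
  · simp
  · rw [Int.cast_one, mul_one, ← Real.sinh_add_cosh]; ring
  · rw [Int.cast_neg, Int.cast_one, mul_neg_one, ← Real.cosh_sub_sinh]; ring

namespace ChowlaProperty

variable {u : ℕ → ℤ}

lemma tendsto_expect_prod_pow (hC : ChowlaProperty u) {s : Finset ℕ} {j : ℕ → ℕ}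
    (hj : ∀ k ∈ s, j k = 1 ∨ j k = 2) (hj1 : ∃ k ∈ s, j k = 1) :
    Tendsto (fun N ↦ 𝔼 n ∈ Finset.Icc 1 N, ∏ k ∈ s, (u (n + k) : ℝ) ^ j k) atTop (𝓝 0) := by
  obtain ⟨k₀, hk₀, hjk₀⟩ := hj1
  obtain ⟨r, hr⟩ := Nat.exists_eq_add_one_of_ne_zero (Finset.card_ne_zero_of_mem hk₀)
  let e : Fin (r + 1) ≃o s := s.orderIsoOfFin hr
  refine (hC r (fun i ↦ e i) e.strictMono (fun i ↦ j (e i)) (fun i ↦ hj _ (e i).2)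
    ⟨e.symm ⟨k₀, hk₀⟩, by simpa using hjk₀⟩).congr fun N ↦ ?_
  rw [expect_Icc_one_eq]
  congr! 2 with n
  exact (e.toEquiv.prod_comp fun k : s ↦ (u (n + k) : ℝ) ^ j k).trans
    (Finset.prod_coe_sort s fun k ↦ (u (n + k) : ℝ) ^ j k)

lemma tendsto_expect_prod_mul_prod_sq (hC : ChowlaProperty u) {s t : Finset ℕ} (hs : s.Nonempty)
    (hst : Disjoint s t) :
    Tendsto (fun N ↦ 𝔼 n ∈ Finset.Icc 1 N,
      (∏ k ∈ s, (u (n + k) : ℝ)) * ∏ k ∈ t, (u (n + k) : ℝ) ^ 2) atTop (𝓝 0) := by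
  obtain ⟨k₀, hk₀⟩ := hs
  refine (hC.tendsto_expect_prod_pow (s := s ∪ t) (j := fun k ↦ if k ∈ s then 1 else 2)
    (fun k _ ↦ ite_eq_or_eq _ _ _) ⟨k₀, by simp [hk₀], by simp [hk₀]⟩).congr fun N ↦ ?_
  refine Finset.expect_congr rfl fun n _ ↦ ?_
  rw [Finset.prod_union hst]
  congr 1
  · exact Finset.prod_congr rfl fun k hk ↦ by simp [hk]
  · exact Finset.prod_congr rfl fun k hk ↦ by simp [Finset.disjoint_right.1 hst hk]

lemma tendsto_expect_prod_mul_prod_one_add_sq (hC : ChowlaProperty u) {s t : Finset ℕ}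
    (hs : s.Nonempty) (hst : Disjoint s t) (c d : ℕ → ℝ) :
    Tendsto (fun N ↦ 𝔼 n ∈ Finset.Icc 1 N,
      (∏ k ∈ s, c k * (u (n + k) : ℝ)) * ∏ k ∈ t, (1 + d k * (u (n + k) : ℝ) ^ 2))
      atTop (𝓝 0) := by
  have total := tendsto_finsetSum t.powerset fun q hq ↦
    (hC.tendsto_expect_prod_mul_prod_sq hs
      (hst.mono_right (Finset.mem_powerset.1 hq))).const_mul ((∏ k ∈ s, c k) * ∏ k ∈ q, d k)
  simp only [mul_zero, Finset.sum_const_zero] at total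
  refine total.congr fun N ↦ ?_
  simp only [Finset.prod_one_add, Finset.prod_mul_distrib, Finset.mul_sum, Finset.mul_expect,
    Finset.expect_sum_comm]
  exact Finset.sum_congr rfl fun q _ ↦ Finset.expect_congr rfl fun n _ ↦ by ring

theorem eventually_expect_exp_le (hC : ChowlaProperty u) (hu : ∀ n, |u n| ≤ 1) (s : Finset ℕ)
    (c : ℕ → ℝ) {B : ℝ} (hB : ∑ k ∈ s, c k ^ 2 / 2 < B) :
    ∀ᶠ N in atTop,
      𝔼 n ∈ Finset.Icc 1 N, Real.exp (∑ k ∈ s, c k * u (n + k)) ≤ Real.exp B := by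
  set main : ℕ → ℝ := fun n ↦ ∏ k ∈ s, (1 + (Real.cosh (c k) - 1) * (u (n + k) : ℝ) ^ 2)
  set error : ℕ → ℝ := fun n ↦ ∑ t ∈ s.powerset.erase ∅, (∏ k ∈ t, Real.sinh (c k) * u (n + k)) *
    ∏ k ∈ s \ t, (1 + (Real.cosh (c k) - 1) * (u (n + k) : ℝ) ^ 2)
  have expand (n : ℕ) : Real.exp (∑ k ∈ s, c k * u (n + k)) = main n + error n := by
    rw [Real.exp_sum, Finset.prod_congr rfl fun k _ ↦ exp_mul_intCast_eq (hu (n + k)) (c k),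
      Finset.prod_add, ← Finset.add_sum_erase _ _ (Finset.empty_mem_powerset s)]
    simp [main, error]
  have main_le (n : ℕ) : main n ≤ Real.exp (∑ k ∈ s, c k ^ 2 / 2) := by
    rw [Real.exp_sum]
    refine Finset.prod_le_prod (fun k _ ↦ ?_) fun k _ ↦
      one_add_cosh_sub_one_mul_sq_le_exp (by exact_mod_cast hu (n + k)) (c k)
    have := sub_nonneg.2 (Real.one_le_cosh (c k))
    positivity
  have error_tendsto : Tendsto (fun N ↦ 𝔼 n ∈ Finset.Icc 1 N, error n) atTop (𝓝 0) := by
    simp only [error, Finset.expect_sum_comm]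
    rw [← Finset.sum_const_zero (s := s.powerset.erase ∅)]
    refine tendsto_finsetSum _ fun t ht ↦ ?_
    exact hC.tendsto_expect_prod_mul_prod_one_add_sq
      (Finset.nonempty_iff_ne_empty.2 (Finset.ne_of_mem_erase ht)) Finset.disjoint_sdiff
      (fun k ↦ Real.sinh (c k)) (fun k ↦ Real.cosh (c k) - 1)
  have gap : 0 < Real.exp B - Real.exp (∑ k ∈ s, c k ^ 2 / 2) := sub_pos.2 (Real.exp_lt_exp.2 hB)
  filter_upwards [error_tendsto.eventually_lt_const gap, eventually_ge_atTop 1] with N hN hN1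
  have main_avg := Finset.expect_le (Finset.nonempty_Icc.2 hN1) fun n _ ↦ main_le n
  simp only [expand, Finset.expect_add_distrib]
  linarith

lemma eventually_expect_exp_le_of_abs_le (hC : ChowlaProperty u) (hu : ∀ n, |u n| ≤ 1)
    {s : Finset ℕ} {c : ℕ → ℝ} {K B : ℝ} (hc : ∀ k ∈ s, |c k| ≤ K)
    (hB : s.card * (K ^ 2 / 2) < B) :
    ∀ᶠ N in atTop,
      𝔼 n ∈ Finset.Icc 1 N, Real.exp (∑ k ∈ s, c k * u (n + k)) ≤ Real.exp B := by
  refine hC.eventually_expect_exp_le hu s c (lt_of_le_of_lt ?_ hB)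
  rw [← nsmul_eq_mul]
  refine Finset.sum_le_card_nsmul _ _ _ fun k hk ↦ ?_
  have : c k ^ 2 ≤ K ^ 2 := sq_le_sq.2 ((hc k hk).trans (le_abs_self K))
  gcongr

end ChowlaProperty

end ExponentialMoments

/-- A sequence in a pseudometric space has zero (topological) entropy if for every `ε, δ > 0` there
is a length `L ≥ 1` such that at most `exp (δ * L)` of its windows of length `L` suffice to shadow
all of them up to `ε`. By submultiplicativity of covering numbers, one such `L` for each `ε, δ` is
as good as all large `L`. -/
def HasZeroEntropy {E : Type*} [PseudoMetricSpace E] (a : ℕ → E) : Prop :=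
  ∀ ε > 0, ∀ δ > 0, ∃ L : ℕ, 0 < L ∧ ∃ s : Finset ℕ, (s.card : ℝ) ≤ Real.exp (δ * L) ∧
    ∀ n, ∃ m ∈ s, ∀ k < L, dist (a (n + k)) (a (m + k)) < ε

section TopologicalEntropy

open Dynamics Uniformity

lemma eventually_exists_isDynCoverOf_card_le_exp {X : Type*} {T : X → X} {F : Set X}
    {U : SetRel X X} {δ : ℝ} (h : coverEntropyEntourage T F U < δ) :
    ∀ᶠ L : ℕ in atTop,
      ∃ s : Finset X, IsDynCoverOf T F U L s ∧ (s.card : ℝ) ≤ Real.exp (δ * L) := by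
  filter_upwards [ExpGrowth.eventually_le_exp h] with L hL
  have hexp : EReal.exp ((δ : EReal) * (L : EReal)) = ENNReal.ofReal (Real.exp (δ * L)) := by
    rw [← EReal.exp_coe]; push_cast; rfl
  rw [hexp] at hL
  have hfin : coverMincard T F U L < ⊤ := by
    rw [← ENat.toENNReal_lt_top]
    exact hL.trans_lt ENNReal.ofReal_lt_top
  obtain ⟨s, hs, hcard⟩ := (coverMincard_finite_iff _ _ _ _).1 hfin
  refine ⟨s, hs, ?_⟩
  rw [← hcard, ENat.toENNReal_coe, ← ENNReal.ofReal_natCast] at hL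
  exact (ENNReal.ofReal_le_ofReal_iff (Real.exp_pos _).le).1 hL

theorem hasZeroEntropy_of_coverEntropy_nonpos {X E : Type*} [UniformSpace X] [PseudoMetricSpace E]
    {T : X → X} {F : Set X} (hT : coverEntropy T F ≤ 0) {f : X → E} (hf : UniformContinuous f)
    {x : X} (hx : ∀ n, T^[n] x ∈ F) : HasZeroEntropy fun n ↦ f (T^[n] x) := by
  classical
  intro ε hε δ hδ
  let U : SetRel X X := {p | dist (f p.1) (f p.2) < ε / 2}
  have hU : U ∈ 𝓤 X := hf (Metric.dist_mem_uniformity (half_pos hε))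
  have hδU : coverEntropyEntourage T F U < δ :=
    ((coverEntropyEntourage_le_coverEntropy T F hU).trans hT).trans_lt (EReal.coe_pos.2 hδ)
  obtain ⟨L, ⟨s, hcover, hcard⟩, hL⟩ :=
    ((eventually_exists_isDynCoverOf_card_le_exp hδU).and (eventually_gt_atTop 0)).exists
  choose center center_mem hcenter using fun n ↦ hcover (hx n)
  -- Points of `s` need not lie on the orbit: recentre each one at a time which it shadows.
  let time : X → ℕ := Function.invFun center
  refine ⟨L, hL, s.image time, le_trans (mod_cast Finset.card_image_le) hcard, fun n ↦
    ⟨time (center n), Finset.mem_image_of_mem _ (center_mem n), fun k hk ↦ ?_⟩⟩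
  have near (m : ℕ) : dist (f (T^[m + k] x)) (f (T^[k] (center m))) < ε / 2 := by
    rw [add_comm, Function.iterate_add_apply]
    exact mem_dynEntourage.1 (hcenter m) k hk
  have same_center : center (time (center n)) = center n := Function.invFun_eq ⟨n, rfl⟩
  have near_time := near (time (center n))
  rw [same_center] at near_time
  linarith [near n, dist_triangle_right (f (T^[n + k] x)) (f (T^[time (center n) + k] x))
    (f (T^[k] (center n)))]

end TopologicalEntropy

lemma sum_mul_le_sum_mul_add_card_mul {ι : Type*} {s : Finset ι} {x y w : ι → ℝ} {ε : ℝ}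
    (hxy : ∀ k ∈ s, dist (x k) (y k) ≤ ε) (hw : ∀ k ∈ s, |w k| ≤ 1) :
    ∑ k ∈ s, x k * w k ≤ ∑ k ∈ s, y k * w k + s.card * ε := by
  rw [← sub_le_iff_le_add', ← Finset.sum_sub_distrib, ← nsmul_eq_mul]
  refine Finset.sum_le_card_nsmul _ _ _ fun k hk ↦ (le_abs_self _).trans ?_
  rw [← sub_mul, abs_mul]
  exact (mul_le_of_le_one_right (abs_nonneg _) (hw k hk)).trans (hxy k hk)

namespace HasZeroEntropy

lemma comp_uniformContinuous {E E' : Type*} [PseudoMetricSpace E] [PseudoMetricSpace E']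
    {a : ℕ → E} (ha : HasZeroEntropy a) {g : E → E'} (hg : UniformContinuous g) :
    HasZeroEntropy fun n ↦ g (a n) := by
  intro ε hε δ hδ
  obtain ⟨ρ, hρ, hgρ⟩ := Metric.uniformContinuous_iff.1 hg ε hε
  obtain ⟨L, hL, s, hcard, hs⟩ := ha ρ hρ δ hδ
  refine ⟨L, hL, s, hcard, fun n ↦ ?_⟩
  obtain ⟨m, hm, hnear⟩ := hs n
  exact ⟨m, hm, fun k hk ↦ hgρ (hnear k hk)⟩

lemma isBounded_range {E : Type*} [PseudoMetricSpace E] {a : ℕ → E} (ha : HasZeroEntropy a) :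
    Bornology.IsBounded (Set.range a) := by
  obtain ⟨L, hL, s, -, hs⟩ := ha 1 one_pos 1 one_pos
  refine (s.finite_toSet.image a).isBounded.thickening (δ := 1) |>.subset ?_
  rintro _ ⟨n, rfl⟩
  obtain ⟨m, hm, hnear⟩ := hs n
  exact Metric.mem_thickening_iff.2 ⟨a m, Set.mem_image_of_mem a hm, hnear 0 hL⟩

variable {a : ℕ → ℝ} {u : ℕ → ℤ}

lemma exists_eventually_expect_block_le (ha : HasZeroEntropy a) (hu : ∀ n, |u n| ≤ 1)
    (hC : ChowlaProperty u) {ε : ℝ} (hε : 0 < ε) :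
    ∃ L : ℕ, 0 < L ∧ ∀ᶠ N in atTop,
      𝔼 n ∈ Finset.Icc 1 N, ∑ k ∈ Finset.range L, a (n + k) * u (n + k) ≤ L * (3 * ε) := by
  obtain ⟨M, hM, haM⟩ := ha.isBounded_range.exists_pos_norm_le
  -- After division by `l * L`, the variance term `L * (l * M) ^ 2` becomes `l * M ^ 2`.
  obtain ⟨l, hl, hlM⟩ : ∃ l > 0, l * M ^ 2 = ε := ⟨ε / M ^ 2, by positivity, by field_simp⟩
  obtain ⟨L, hL, s, hcard, hs⟩ := ha ε hε (l * ε) (by positivity)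
  refine ⟨L, hL, ?_⟩
  have amplitude (m : ℕ) : |l * a m| ≤ l * M := by
    rw [abs_mul, abs_of_pos hl]
    exact mul_le_mul_of_nonneg_left (haM _ (Set.mem_range_self m)) hl.le
  have variance : (Finset.range L).card * ((l * M) ^ 2 / 2) < L * (l * ε) := by
    rw [Finset.card_range, show (l * M) ^ 2 = l * ε by rw [← hlM]; ring]
    gcongr
    exact half_lt_self (by positivity)
  have shadow (n : ℕ) : ∃ m ∈ s,
      l * ∑ k ∈ Finset.range L, a (n + k) * u (n + k) - l * ε * L ≤
        ∑ k ∈ Finset.range L, l * a (m + k) * u (n + k) := by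
    obtain ⟨m, hm, hnear⟩ := hs n
    refine ⟨m, hm, ?_⟩
    have hclose := sum_mul_le_sum_mul_add_card_mul (w := fun k ↦ (u (n + k) : ℝ))
      (fun k hk ↦ (hnear k (Finset.mem_range.1 hk)).le) fun k _ ↦ mod_cast hu (n + k)
    simp only [mul_assoc, ← Finset.mul_sum, ← mul_sub]
    rw [Finset.card_range] at hclose
    gcongr
    linarith
  filter_upwards [(Filter.eventually_all_finset s).2 fun m _ ↦
    hC.eventually_expect_exp_le_of_abs_le hu (fun k _ ↦ amplitude (m + k)) variance,
    eventually_ge_atTop 1] with N hmoment hN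
  have hmax := expect_le_add_of_expect_exp_le (Finset.nonempty_Icc.2 hN) (fun n _ ↦ shadow n)
    hcard hmoment
  rw [Finset.expect_sub_distrib, Finset.expect_const (Finset.nonempty_Icc.2 hN),
    ← Finset.mul_expect] at hmax
  refine le_of_mul_le_mul_left ?_ hl
  linarith

lemma eventually_expect_mul_le (ha : HasZeroEntropy a) (hu : ∀ n, |u n| ≤ 1)
    (hC : ChowlaProperty u) {ε : ℝ} (hε : 0 < ε) :
    ∀ᶠ N in atTop, 𝔼 n ∈ Finset.Icc 1 N, a n * u n ≤ ε := by
  obtain ⟨M, -, haM⟩ := ha.isBounded_range.exists_pos_norm_le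
  obtain ⟨L, hL, hblock⟩ := ha.exists_eventually_expect_block_le hu hC (ε := ε / 6) (by positivity)
  refine eventually_expect_Icc_one_le_of_block (M := M) (fun n ↦ ?_) hL (by linarith) hblock
  rw [abs_mul]
  exact (mul_le_of_le_one_right (abs_nonneg _) (mod_cast hu n)).trans
    (haM _ (Set.mem_range_self n))

theorem tendsto_expect_mul (ha : HasZeroEntropy a) (hu : ∀ n, |u n| ≤ 1)
    (hC : ChowlaProperty u) :
    Tendsto (fun N ↦ 𝔼 n ∈ Finset.Icc 1 N, a n * u n) atTop (𝓝 0) := by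
  rw [tendsto_order]
  have hneg : HasZeroEntropy fun n ↦ -a n := ha.comp_uniformContinuous uniformContinuous_neg
  constructor
  · intro ε hε
    filter_upwards [hneg.eventually_expect_mul_le hu hC (ε := -ε / 2) (by linarith)] with N hN
    simp only [neg_mul, Finset.expect_neg_distrib] at hN
    linarith
  · intro ε hε
    filter_upwards [ha.eventually_expect_mul_le hu hC (half_pos hε)] with N hN
    linarith

theorem tendsto_expect_mul_complex {a : ℕ → ℂ} (ha : HasZeroEntropy a) (hu : ∀ n, |u n| ≤ 1)
    (hC : ChowlaProperty u) :
    Tendsto (fun N ↦ 𝔼 n ∈ Finset.Icc 1 N, a n * u n) atTop (𝓝 0) := by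
  have hre := (ha.comp_uniformContinuous Complex.uniformContinuous_re).tendsto_expect_mul hu hC
  have him := (ha.comp_uniformContinuous Complex.uniformContinuous_im).tendsto_expect_mul hu hC
  have total := ((Complex.continuous_ofReal.tendsto 0).comp hre).add
    (((Complex.continuous_ofReal.tendsto 0).comp him).mul_const Complex.I)
  rw [Complex.ofReal_zero, zero_mul, add_zero] at total
  refine total.congr fun N ↦ ?_
  simp only [Function.comp_apply, expect_Icc_one_eq]
  push_cast
  rw [mul_assoc, ← mul_add, Finset.sum_mul, ← Finset.sum_add_distrib]
  congr! 2 with n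
  rw [mul_right_comm, ← add_mul, Complex.re_add_im]

end HasZeroEntropy

theorem chowla_implies_sarnak_general {u : ℕ → ℤ} (hu : ∀ n, |u n| ≤ 1) (hC : ChowlaProperty u)
    {X : Type*} [UniformSpace X] {T : X → X} {F : Set X} (hT : Dynamics.coverEntropy T F ≤ 0)
    {f : X → ℂ} (hf : UniformContinuous f) {x : X} (hx : ∀ n, T^[n] x ∈ F) :
    Tendsto (fun N : ℕ ↦ (1 / (N : ℂ)) * ∑ n ∈ Finset.Icc 1 N, f (T^[n] x) * (u n : ℂ))
      atTop (𝓝 0) := by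
  simp only [← expect_Icc_one_eq]
  exact (hasZeroEntropy_of_coverEntropy_nonpos hT hf hx).tendsto_expect_mul_complex hu hC

/-- The Chowla conjecture implies Sarnak's conjecture: if all Chowla-type correlations of
the Möbius function vanish, then every topological dynamical system `(T,X)` (a
homeomorphism `T` of a compact metric space `X`) with zero topological entropy is
Möbius orthogonal. -/
theorem chowla_implies_sarnak
    (hChowla : ∀ (r : ℕ) (k : Fin (r + 1) → ℕ), StrictMono k →
      ∀ j : Fin (r + 1) → ℕ, (∀ i, j i = 1 ∨ j i = 2) → (∃ i, j i = 1) →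
        Tendsto
          (fun N : ℕ => (1 / (N : ℝ)) *
            ∑ n ∈ Finset.Icc 1 N,
              ∏ i, ((ArithmeticFunction.moebius (n + k i) : ℤ) : ℝ) ^ (j i))
          atTop (nhds 0)) :
    ∀ (X : Type) [MetricSpace X] [CompactSpace X] (T : X ≃ₜ X),
      Dynamics.coverEntropy (⇑T) Set.univ = 0 →
      ∀ (f : C(X, ℂ)) (x : X),
        Tendsto
          (fun N : ℕ => (1 / (N : ℂ)) *
            ∑ n ∈ Finset.Icc 1 N, f ((⇑T)^[n] x) * (ArithmeticFunction.moebius n : ℂ))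
          atTop (nhds 0) := by
  intro X _ _ T hT f x
  exact chowla_implies_sarnak_general (u := fun n ↦ ArithmeticFunction.moebius n)
    (fun _ ↦ ArithmeticFunction.abs_moebius_le_one) hChowla hT.le
    (CompactSpace.uniformContinuous_of_continuous f.continuous) fun _ ↦ Set.mem_univ _
end

section
/- Let (T,X) be a topological dynamical system, x ∈ X, and let ν be a T-invariant Borel probability measure on X which is ergodic. If x is logarithmically quasi-generic for ν, then x is quasi-generic for ν. -/
open Filter Topology MeasureTheory

/-!
For a real sequence, summation by parts expresses logarithmic averages as averages of Cesàro
averages, so a cluster point `L` of the former bounds the lower limit of the latter: for every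
`c > L`, infinitely many Cesàro averages lie below `c`.

Let `f` be a continuous Hilbert-space-valued function. By the mean ergodic theorem and ergodicity,
the Birkhoff average `A_H f` satisfies `∫ ‖A_H f - ∫ f‖ < ε` for some `H`. Applying the first remark
to `‖A_H f - ∫ f‖` along the orbit of `x` gives infinitely many times `m` at which the empirical
average of `A_H f`, hence also that of `f`, is `ε`-close to `∫ f`. Since `f` may be vector-valued,
finitely many real test functions are handled at once, and separability of `C(X, ℝ)` turns this
into convergence along a single subsequence of times.
-/

section LogAverage

/-- The logarithmic average `(1 / log m) ∑_{1 ≤ n ≤ m} a n / n` of a real sequence. Its value is `0`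
for `m ≤ 1`, where the logarithm vanishes. -/
noncomputable def logAverage (a : ℕ → ℝ) (m : ℕ) : ℝ :=
  (1 / Real.log m) * ∑ n ∈ Finset.Icc 1 m, a n / n

theorem tendsto_log_natCast_atTop : Tendsto (fun m : ℕ ↦ Real.log m) atTop atTop :=
  Real.tendsto_log_atTop.comp tendsto_natCast_atTop_atTop

theorem tendsto_logAverage_const (c : ℝ) : Tendsto (logAverage fun _ ↦ c) atTop (𝓝 c) := by
  have hlim : Tendsto (fun m : ℕ ↦ c * (1 + ((harmonic m : ℝ) - Real.log m) / Real.log m))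
      atTop (𝓝 (c * (1 + 0))) :=
    ((Real.tendsto_harmonic_sub_log.div_atTop tendsto_log_natCast_atTop).const_add 1).const_mul c
  rw [add_zero, mul_one] at hlim
  refine hlim.congr' ?_
  filter_upwards [tendsto_log_natCast_atTop.eventually_ne_atTop 0] with m hm
  simp only [logAverage, harmonic_eq_sum_Icc, div_eq_mul_inv c, ← Finset.mul_sum]
  push_cast
  field_simp
  ring

theorem logAverage_sub (a b : ℕ → ℝ) (m : ℕ) :
    logAverage (fun n ↦ a n - b n) m = logAverage a m - logAverage b m := by
  simp only [logAverage, sub_div, Finset.sum_sub_distrib, mul_sub]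

/-- Summation by parts: `∑_{n ≤ m} b n / n - B m / m`, with `B` the partial sums of `b`, increases
by `B m / (m (m + 1))` from `m` to `m + 1`. -/
theorem exists_le_sum_div_of_eventually_sum_nonneg {b : ℕ → ℝ}
    (hb : ∀ᶠ m : ℕ in atTop, 0 ≤ ∑ n ∈ Finset.Icc 1 m, b n) :
    ∃ C, ∀ᶠ m : ℕ in atTop, C ≤ ∑ n ∈ Finset.Icc 1 m, b n / n := by
  set B : ℕ → ℝ := fun m ↦ ∑ n ∈ Finset.Icc 1 m, b n with hB
  set R : ℕ → ℝ := fun m ↦ ∑ n ∈ Finset.Icc 1 m, b n / n with hR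
  obtain ⟨M, hM⟩ := eventually_atTop.1 (hb.and (eventually_ge_atTop 1))
  have le_succ : ∀ m ≥ M, R m - B m / m ≤ R (m + 1) - B (m + 1) / (m + 1 : ℕ) := fun m hm ↦ by
    obtain ⟨hBm, hm0⟩ := hM m hm
    have increment : R (m + 1) - B (m + 1) / (m + 1 : ℕ) - (R m - B m / m)
        = B m / (m * (m + 1)) := by
      simp only [hB, hR, Finset.sum_Icc_succ_top (Nat.le_add_left 1 m)]
      push_cast
      field_simp
      ring
    have : 0 ≤ B m / (m * (m + 1)) := by positivity
    linarith
  refine ⟨R M - B M / M, eventually_atTop.2 ⟨M, fun m hm ↦ ?_⟩⟩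
  have monotone : R M - B M / M ≤ R m - B m / m := by
    induction m, hm using Nat.le_induction with
    | base => exact le_rfl
    | succ m hm ih => exact ih.trans (le_succ m hm)
  have : 0 ≤ B m / m := div_nonneg (hM m hm).1 m.cast_nonneg
  linarith

theorem eventually_lt_logAverage {a : ℕ → ℝ} {c c' : ℝ}
    (ha : ∀ᶠ m : ℕ in atTop, c ≤ (1 / (m : ℝ)) * ∑ n ∈ Finset.Icc 1 m, a n) (hc : c' < c) :
    ∀ᶠ m in atTop, c' < logAverage a m := by
  have partial_sums : ∀ᶠ m : ℕ in atTop, 0 ≤ ∑ n ∈ Finset.Icc 1 m, (a n - c) := by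
    filter_upwards [ha, eventually_gt_atTop 0] with m ham hm
    have hm0 : (0 : ℝ) < m := by exact_mod_cast hm
    rw [one_div, le_inv_mul_iff₀ hm0] at ham
    simpa [Finset.sum_sub_distrib] using ham
  obtain ⟨C, hC⟩ := exists_le_sum_div_of_eventually_sum_nonneg partial_sums
  have hlim : Tendsto (fun m : ℕ ↦ logAverage (fun _ ↦ c) m + C / Real.log m) atTop (𝓝 c) := by
    simpa using (tendsto_logAverage_const c).add (tendsto_log_natCast_atTop.const_div_atTop C)
  filter_upwards [hlim.eventually_const_lt hc, hC,
    tendsto_log_natCast_atTop.eventually_gt_atTop 0] with m hlt hCm hlog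
  have : C / Real.log m ≤ logAverage (fun n ↦ a n - c) m := by
    rw [logAverage, div_eq_inv_mul, one_div]
    gcongr
  rw [logAverage_sub] at this
  linarith

theorem frequently_average_lt_of_mapClusterPt_logAverage {a : ℕ → ℝ} {L c : ℝ}
    (hL : MapClusterPt L atTop (logAverage a)) (hc : L < c) :
    ∃ᶠ m : ℕ in atTop, (1 / (m : ℝ)) * ∑ n ∈ Finset.Icc 1 m, a n < c := by
  obtain ⟨c', hLc', hc'⟩ := exists_between hc
  intro h
  simp only [not_lt] at h
  exact hL.frequently (gt_mem_nhds hLc') <|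
    (eventually_lt_logAverage h hc').mono fun _ ↦ not_lt_of_gt

end LogAverage

section BirkhoffAverage

theorem birkhoffAverage_apply_eq_sum_Icc {R α M : Type*} [DivisionSemiring R] [AddCommMonoid M]
    [Module R M] (T : α → α) (f : α → M) (m : ℕ) (x : α) :
    birkhoffAverage R T f m (T x) = (m : R)⁻¹ • ∑ n ∈ Finset.Icc 1 m, f (T^[n] x) := by
  simp only [birkhoffAverage, birkhoffSum, ← Function.iterate_succ_apply, Nat.succ_eq_add_one]
  rw [Finset.range_eq_Ico, Finset.sum_Ico_add' (fun n ↦ f (T^[n] x)), zero_add,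
    Finset.Ico_add_one_right_eq_Icc]

theorem continuous_birkhoffAverage {R α M : Type*} [DivisionSemiring R] [AddCommMonoid M]
    [Module R M] [TopologicalSpace α] [TopologicalSpace M] [ContinuousAdd M]
    [ContinuousConstSMul R M] {T : α → α} {f : α → M} (hT : Continuous T) (hf : Continuous f)
    (n : ℕ) : Continuous (birkhoffAverage R T f n) :=
  (continuous_finsetSum _ fun k _ ↦ hf.comp (hT.iterate k)).const_smul _

theorem birkhoffAverage_birkhoffAverage_comm {R α M : Type*} [Semifield R] [AddCommMonoid M]
    [Module R M] (T : α → α) (f : α → M) (m n : ℕ) (x : α) :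
    birkhoffAverage R T (birkhoffAverage R T f m) n x =
      birkhoffAverage R T (birkhoffAverage R T f n) m x := by
  simp only [birkhoffAverage, birkhoffSum, ← Finset.smul_sum, ← Function.iterate_add_apply]
  rw [smul_comm, Finset.sum_comm]
  simp only [add_comm]

variable {α E : Type*} [NormedAddCommGroup E]

theorem norm_birkhoffAverage_sub_le [NormedSpace ℝ E] (T : α → α) (f : α → E) (c : E) {n : ℕ}
    (hn : n ≠ 0) (x : α) :
    ‖birkhoffAverage ℝ T f n x - c‖ ≤ birkhoffAverage ℝ T (fun y ↦ ‖f y - c‖) n x := by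
  have hn0 : (n : ℝ) ≠ 0 := Nat.cast_ne_zero.2 hn
  have hc : birkhoffAverage ℝ T (fun y ↦ f y - c) n x = birkhoffAverage ℝ T f n x - c := by
    simp [birkhoffAverage, birkhoffSum, smul_sub, ← Nat.cast_smul_eq_nsmul ℝ, smul_smul, hn0]
  rw [← hc]
  simp only [birkhoffAverage, birkhoffSum, norm_smul, norm_inv, RCLike.norm_natCast, smul_eq_mul]
  gcongr
  exact norm_sum_le _ _

theorem norm_birkhoffAverage_le [NormedSpace ℝ E] {T : α → α} {f : α → E} {C : ℝ} (hC : 0 ≤ C)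
    (hf : ∀ y, ‖f y‖ ≤ C) (n : ℕ) (x : α) : ‖birkhoffAverage ℝ T f n x‖ ≤ C := by
  obtain rfl | hn := eq_or_ne n 0
  · simpa using hC
  · have hn0 : (0 : ℝ) < n := by positivity
    rw [birkhoffAverage, birkhoffSum, norm_smul, norm_inv, RCLike.norm_natCast, inv_mul_le_iff₀ hn0]
    simpa using norm_sum_le_of_le (Finset.range n) fun k _ ↦ hf (T^[k] x)

theorem equicontinuous_birkhoffAverage_apply {X : Type*} [TopologicalSpace X] [CompactSpace X]
    [NormedSpace ℝ E] (T : X → X) (x : X) :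
    Equicontinuous fun m (f : C(X, E)) ↦ birkhoffAverage ℝ T f m x := by
  refine (LipschitzWith.uniformEquicontinuous _ 1 fun m ↦
    .of_dist_le_mul fun f g ↦ ?_).equicontinuous
  have : birkhoffAverage ℝ T f m x - birkhoffAverage ℝ T g m x
      = birkhoffAverage ℝ T (f - g : C(X, E)) m x := by
    rw [ContinuousMap.coe_sub, birkhoffAverage_sub]
    rfl
  rw [NNReal.coe_one, one_mul, dist_eq_norm, dist_eq_norm, this]
  exact norm_birkhoffAverage_le (norm_nonneg _) (f - g).norm_coe_le_norm m x

variable (𝕜 : Type*) [RCLike 𝕜] [NormedSpace 𝕜 E] {T : α → α} {f : α → E}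

theorem tendsto_birkhoffAverage_iterate_sub_birkhoffAverage
    (hf : Bornology.IsBounded (Set.range f)) (x : α) (k : ℕ) :
    Tendsto (fun n ↦ birkhoffAverage 𝕜 T f n (T^[k] x) - birkhoffAverage 𝕜 T f n x)
      atTop (𝓝 0) := by
  induction k with
  | zero => simp
  | succ k ih =>
    have := (tendsto_birkhoffAverage_apply_sub_birkhoffAverage' 𝕜 hf T (T^[k] x)).add ih
    simpa [Function.iterate_succ_apply'] using this

theorem tendsto_birkhoffAverage_birkhoffAverage_sub
    (hf : Bornology.IsBounded (Set.range f)) {H : ℕ} (hH : H ≠ 0) (x : α) :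
    Tendsto (fun n ↦ birkhoffAverage 𝕜 T (birkhoffAverage 𝕜 T f H) n x - birkhoffAverage 𝕜 T f n x)
      atTop (𝓝 0) := by
  have hH0 : (H : 𝕜) ≠ 0 := Nat.cast_ne_zero.2 hH
  have hlim := (tendsto_finsetSum (Finset.range H) fun k _ ↦
    tendsto_birkhoffAverage_iterate_sub_birkhoffAverage 𝕜 (T := T) hf x k).const_smul (H : 𝕜)⁻¹
  rw [Finset.sum_const_zero, smul_zero] at hlim
  refine hlim.congr fun n ↦ ?_
  rw [birkhoffAverage_birkhoffAverage_comm, Finset.sum_sub_distrib, smul_sub, Finset.sum_const,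
    Finset.card_range, ← Nat.cast_smul_eq_nsmul 𝕜, inv_smul_smul₀ hH0]
  rfl

end BirkhoffAverage

section MeanErgodic

variable {α E : Type*} [MeasurableSpace α] {ν : Measure α} {T : α → α}
  [NormedAddCommGroup E]

theorem birkhoffAverage_compMeasurePreserving_ae_eq [NormedSpace ℝ E] {p : ENNReal}
    (hT : MeasurePreserving T ν ν) (F : Lp E p ν) (n : ℕ) :
    (birkhoffAverage ℝ (Lp.compMeasurePreserving T hT) id n F : Lp E p ν)
      =ᵐ[ν] birkhoffAverage ℝ T F n := by
  have iterate : ∀ k, (Lp.compMeasurePreserving T hT)^[k] F =ᵐ[ν] F ∘ T^[k] := fun k ↦ by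
    rw [Lp.compMeasurePreserving_iterate]
    exact Lp.coeFn_compMeasurePreserving F (hT.iterate k)
  filter_upwards [ae_all_iff.2 iterate, Lp.coeFn_smul (n : ℝ)⁻¹
    (birkhoffSum (Lp.compMeasurePreserving T hT) id n F), Lp.coeFn_fun_finsetSum
    (Finset.range n) fun k ↦ (Lp.compMeasurePreserving T hT)^[k] F] with y hiter hsmul hsum
  rw [birkhoffAverage, hsmul, Pi.smul_apply, birkhoffAverage]
  simp only [birkhoffSum, id, hsum, hiter, Function.comp_apply]

theorem integral_norm_le_norm [IsProbabilityMeasure ν] {p : ENNReal} [Fact (1 ≤ p)]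
    (G : Lp E p ν) : ∫ y, ‖G y‖ ∂ν ≤ ‖G‖ := by
  rw [integral_norm_eq_lintegral_enorm (Lp.aestronglyMeasurable G),
    ← eLpNorm_one_eq_lintegral_enorm, Lp.norm_def]
  exact ENNReal.toReal_mono (Lp.eLpNorm_ne_top G) <|
    eLpNorm_le_eLpNorm_of_exponent_le Fact.out (Lp.aestronglyMeasurable G)

variable [InnerProductSpace ℝ E] [CompleteSpace E] [IsProbabilityMeasure ν]

theorem tendsto_birkhoffAverage_compMeasurePreserving (hT : Ergodic T ν) (F : Lp E 2 ν) :
    Tendsto (birkhoffAverage ℝ (Lp.compMeasurePreserving T hT.toMeasurePreserving) id · F)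
      atTop (𝓝 (Lp.const 2 ν (∫ y, F y ∂ν))) := by
  set U : Lp E 2 ν →L[ℝ] Lp E 2 ν :=
    (Lp.compMeasurePreservingₗᵢ ℝ T hT.toMeasurePreserving).toContinuousLinearMap
  set K := U.eqLocus (1 : Lp E 2 ν →L[ℝ] Lp E 2 ν)
  have mem_K_const : ∀ c : E, Lp.const 2 ν c ∈ K := fun c ↦ rfl
  have exists_const : ∀ G ∈ K, ∃ c, G = Lp.const 2 ν c := fun G hG ↦ by
    obtain ⟨c, hc⟩ := hT.eq_const_of_compMeasurePreserving_eq (congrArg Subtype.val hG)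
    exact ⟨c, Subtype.ext hc⟩
  have integral_sub_mean : ∫ y, (F - Lp.const 2 ν (∫ z, F z ∂ν) : Lp E 2 ν) y ∂ν = 0 := by
    have hF : Integrable F ν := (Lp.memLp F).integrable one_le_two
    rw [integral_congr_ae (Lp.coeFn_sub _ _), integral_sub' hF ((Lp.memLp _).integrable one_le_two),
      integral_congr_ae (Lp.coeFn_const 2 ν _)]
    simp
  have projection : K.starProjection F = Lp.const 2 ν (∫ y, F y ∂ν) := by
    refine Submodule.eq_starProjection_of_mem_of_inner_eq_zero (mem_K_const _) fun G hG ↦ ?_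
    obtain ⟨c, rfl⟩ := exists_const G hG
    rw [real_inner_comm, ← indicatorConstLp_univ, L2.inner_indicatorConstLp_eq_inner_setIntegral,
      setIntegral_univ, integral_sub_mean, inner_zero_right]
  rw [← projection]
  exact U.tendsto_birkhoffAverage_orthogonalProjection
    (LinearIsometry.norm_toContinuousLinearMap_le _) F

theorem tendsto_integral_norm_birkhoffAverage_sub (hT : Ergodic T ν) {f : α → E}
    (hf : MemLp f 2 ν) :
    Tendsto (fun n ↦ ∫ y, ‖birkhoffAverage ℝ T f n y - ∫ z, f z ∂ν‖ ∂ν) atTop (𝓝 0) := by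
  have hlim := tendsto_iff_norm_sub_tendsto_zero.1 <|
    tendsto_birkhoffAverage_compMeasurePreserving hT (hf.toLp f)
  refine squeeze_zero (fun n ↦ integral_nonneg fun y ↦ norm_nonneg _) (fun n ↦ ?_) hlim
  refine le_of_eq_of_le (integral_congr_ae ?_) (integral_norm_le_norm _)
  filter_upwards [birkhoffAverage_compMeasurePreserving_ae_eq hT.toMeasurePreserving (hf.toLp f) n,
    hT.quasiMeasurePreserving.birkhoffAverage_ae_eq_of_ae_eq ℝ hf.coeFn_toLp n,
    Lp.coeFn_const 2 ν (∫ z, hf.toLp f z ∂ν), Lp.coeFn_sub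
      (birkhoffAverage ℝ (Lp.compMeasurePreserving T hT.toMeasurePreserving) id n
        (hf.toLp f)) (Lp.const 2 ν (∫ z, hf.toLp f z ∂ν))] with y hLp hae hconst hsub
  rw [hsub, Pi.sub_apply, hLp, hae, hconst, Function.const_apply, integral_congr_ae hf.coeFn_toLp]

end MeanErgodic

section ClusterPoints

theorem mapClusterPt_pi_iff {ι α : Type*} {Y : ι → Type*} [∀ i, TopologicalSpace (Y i)]
    {l : Filter α} {u : α → ∀ i, Y i} {y : ∀ i, Y i} :
    MapClusterPt y l u ↔
      ∀ s : Finset ι, MapClusterPt (s.restrict y) l fun a ↦ s.restrict (u a) := by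
  refine ⟨fun h s ↦ h.continuousAt_comp s.continuous_restrict.continuousAt, fun h ↦ ?_⟩
  refine mapClusterPt_iff_frequently.2 fun V hV ↦ ?_
  rw [nhds_pi, Filter.mem_pi'] at hV
  obtain ⟨s, t, ht, hst⟩ := hV
  have nhds_restrict : Set.univ.pi (fun i : s ↦ t i) ∈ 𝓝 (s.restrict y) :=
    set_pi_mem_nhds Set.finite_univ fun i _ ↦ ht i
  refine ((h s).frequently nhds_restrict).mono fun a ha ↦ hst fun i hi ↦ ?_
  exact ha ⟨i, hi⟩ trivial

theorem exists_strictMono_tendsto_of_mapClusterPt {Z Y : Type*} [TopologicalSpace Z]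
    [TopologicalSpace.SeparableSpace Z] [UniformSpace Y] [FirstCountableTopology Y]
    {F : ℕ → Z → Y} {φ : Z → Y} (hF : Equicontinuous F) (hφ : MapClusterPt φ atTop F) :
    ∃ M : ℕ → ℕ, StrictMono M ∧ ∀ z, Tendsto (fun k ↦ F (M k) z) atTop (𝓝 (φ z)) := by
  obtain ⟨U, -, hU⟩ := mapClusterPt_iff_ultrafilter.1 hφ
  have hφ_cont : Continuous φ := hU.continuous_of_equicontinuous hF
  obtain ⟨S, hS_countable, hS_dense⟩ := TopologicalSpace.exists_countable_dense Z
  have := hS_countable.to_subtype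
  have restrict : Continuous fun (g : Z → Y) (z : S) ↦ g z :=
    continuous_pi fun z ↦ continuous_apply z.1
  obtain ⟨M, hM, hlim⟩ := (hφ.continuousAt_comp restrict.continuousAt).tendsto_subseq
  refine ⟨M, hM, fun z ↦ ?_⟩
  refine ((hF.comp M) z).tendsto_of_mem_closure hφ_cont.continuousWithinAt (fun y hy ↦ ?_)
    (hS_dense z)
  exact tendsto_pi_nhds.1 hlim ⟨y, hy⟩

end ClusterPoints

section LogQuasiGeneric

variable {X : Type*} [TopologicalSpace X] [CompactSpace X] [MeasurableSpace X]
  [OpensMeasurableSpace X] {T : X → X} {x : X} {ν : Measure X} [IsProbabilityMeasure ν]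

theorem exists_integral_norm_birkhoffAverage_sub_lt {E : Type*} [NormedAddCommGroup E]
    [InnerProductSpace ℝ E] [CompleteSpace E] [SecondCountableTopologyEither X E]
    (hT : Ergodic T ν) (f : C(X, E)) {ε : ℝ} (hε : 0 < ε) :
    ∃ H ≠ 0, ∫ y, ‖birkhoffAverage ℝ T f H y - ∫ z, f z ∂ν‖ ∂ν < ε := by
  have hf : MemLp f 2 ν :=
    .of_bound f.continuous.aestronglyMeasurable ‖f‖ (.of_forall f.norm_coe_le_norm)
  exact ((eventually_ne_atTop 0).and <|
    (tendsto_integral_norm_birkhoffAverage_sub hT hf).eventually_lt_const hε).exists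

theorem mapClusterPt_birkhoffAverage {E : Type*} [NormedAddCommGroup E]
    [InnerProductSpace ℝ E] [CompleteSpace E] [SecondCountableTopologyEither X E]
    (hT : Continuous T) (hν : Ergodic T ν)
    (hlog : ∀ g : C(X, ℝ), MapClusterPt (∫ y, g y ∂ν) atTop (logAverage fun n ↦ g (T^[n] x)))
    (f : C(X, E)) :
    MapClusterPt (∫ y, f y ∂ν) atTop fun m ↦ birkhoffAverage ℝ T f m (T x) := by
  refine Metric.nhds_basis_ball.mapClusterPt_iff_frequently.2 fun ε hε ↦ ?_
  obtain ⟨H, hH, hsmall⟩ := exists_integral_norm_birkhoffAverage_sub_lt hν f (half_pos hε)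
  set c := ∫ y, f y ∂ν
  let g : C(X, ℝ) := ⟨fun y ↦ ‖birkhoffAverage ℝ T f H y - c‖,
    ((continuous_birkhoffAverage hT f.continuous H).sub continuous_const).norm⟩
  have frequently_small : ∃ᶠ m in atTop, birkhoffAverage ℝ T g m (T x) < ε / 2 := by
    simpa only [birkhoffAverage_apply_eq_sum_Icc, smul_eq_mul, one_div] using
      frequently_average_lt_of_mapClusterPt_logAverage (hlog g) hsmall
  have eventually_close : ∀ᶠ m in atTop, ‖birkhoffAverage ℝ T (birkhoffAverage ℝ T f H) m (T x)
      - birkhoffAverage ℝ T f m (T x)‖ < ε / 2 :=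
    (tendsto_birkhoffAverage_birkhoffAverage_sub ℝ (isCompact_range f.continuous).isBounded hH
      (T x)).norm.eventually_lt_const (by simpa using half_pos hε)
  refine (frequently_small.and_eventually (eventually_close.and (eventually_ne_atTop 0))).mono ?_
  rintro m ⟨hg, hclose, hm⟩
  rw [norm_sub_rev] at hclose
  rw [mem_ball_iff_norm]
  calc ‖birkhoffAverage ℝ T f m (T x) - c‖
    _ ≤ ‖birkhoffAverage ℝ T f m (T x) - birkhoffAverage ℝ T (birkhoffAverage ℝ T f H) m (T x)‖
        + ‖birkhoffAverage ℝ T (birkhoffAverage ℝ T f H) m (T x) - c‖ :=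
      norm_sub_le_norm_sub_add_norm_sub ..
    _ < ε / 2 + ε / 2 := add_lt_add hclose <|
        (norm_birkhoffAverage_sub_le T (birkhoffAverage ℝ T f H) c hm (T x)).trans_lt hg
    _ = ε := add_halves ε

theorem mapClusterPt_birkhoffAverage_pi (hT : Continuous T) (hν : Ergodic T ν)
    (hlog : ∀ g : C(X, ℝ), MapClusterPt (∫ y, g y ∂ν) atTop (logAverage fun n ↦ g (T^[n] x))) :
    MapClusterPt (fun f : C(X, ℝ) ↦ ∫ y, f y ∂ν) atTop
      fun m (f : C(X, ℝ)) ↦ birkhoffAverage ℝ T f m (T x) := by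
  refine mapClusterPt_pi_iff.2 fun s ↦ ?_
  let F : C(X, EuclideanSpace ℝ s) := ⟨fun y ↦ WithLp.toLp 2 fun f ↦ f.1 y, by fun_prop⟩
  have hF := (mapClusterPt_birkhoffAverage hT hν hlog F).continuousAt_comp
    (PiLp.continuous_ofLp 2 _).continuousAt
  have coordinate_integral : (∫ y, F y ∂ν).ofLp = s.restrict fun f ↦ ∫ y, f y ∂ν := by
    ext f
    have hF_int : Integrable F ν :=
      F.continuous.integrable_of_hasCompactSupport (.of_compactSpace _)
    exact ((EuclideanSpace.proj f : EuclideanSpace ℝ s →L[ℝ] ℝ).integral_comp_comm hF_int).symm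
  have coordinate_average : ∀ m, (birkhoffAverage ℝ T F m (T x)).ofLp =
      s.restrict fun f ↦ birkhoffAverage ℝ T f m (T x) := fun m ↦ by
    ext f
    exact map_birkhoffAverage ℝ ℝ (EuclideanSpace.proj f : EuclideanSpace ℝ s →L[ℝ] ℝ) T F m (T x)
  simpa only [Function.comp_def, coordinate_integral, coordinate_average] using hF

theorem log_quasi_generic_ergodic_implies_quasi_generic_general [R1Space X]
    [SecondCountableTopology X] (hT : Continuous T) (hν : Ergodic T ν)
    (hlog : ∀ f : C(X, ℝ), MapClusterPt (∫ y, f y ∂ν) atTop (logAverage fun n ↦ f (T^[n] x))) :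
    ∃ M : ℕ → ℕ, StrictMono M ∧ ∀ f : C(X, ℝ),
      Tendsto (fun k ↦ (1 / (M k : ℝ)) * ∑ n ∈ Finset.Icc 1 (M k), f (T^[n] x)) atTop
        (𝓝 (∫ y, f y ∂ν)) := by
  simpa only [birkhoffAverage_apply_eq_sum_Icc, smul_eq_mul, one_div] using
    exists_strictMono_tendsto_of_mapClusterPt (equicontinuous_birkhoffAverage_apply T (T x))
      (mapClusterPt_birkhoffAverage_pi hT hν hlog)

end LogQuasiGeneric

/-- If `x` is logarithmically quasi-generic for an ergodic `T`-invariant Borel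
probability measure `ν` (convergence of logarithmic empirical measures along a
subsequence, in the weak-* topology, expressed by testing against continuous
functions), then `x` is quasi-generic for `ν`. -/
theorem log_quasi_generic_ergodic_implies_quasi_generic
    {X : Type} [MetricSpace X] [CompactSpace X] [MeasurableSpace X] [BorelSpace X]
    (T : X ≃ₜ X) (x : X) (ν : Measure X) [IsProbabilityMeasure ν]
    (hErg : Ergodic (⇑T) ν)
    (hlog : ∃ N : ℕ → ℕ, StrictMono N ∧ ∀ f : C(X, ℝ),
      Tendsto
        (fun k : ℕ => (1 / Real.log (N k)) *
          ∑ n ∈ Finset.Icc 1 (N k), f ((⇑T)^[n] x) / n)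
        atTop (nhds (∫ y, f y ∂ν))) :
    ∃ M : ℕ → ℕ, StrictMono M ∧ ∀ f : C(X, ℝ),
      Tendsto
        (fun k : ℕ => (1 / (M k : ℝ)) * ∑ n ∈ Finset.Icc 1 (M k), f ((⇑T)^[n] x))
        atTop (nhds (∫ y, f y ∂ν)) := by
  obtain ⟨N, hN, hlog⟩ := hlog
  exact log_quasi_generic_ergodic_implies_quasi_generic_general T.continuous hErg fun f ↦
    .of_comp hN.tendsto_atTop (hlog f).mapClusterPt
end

section
/- Let A ⊂ ℂ be a finite set and let x ∈ A^ℤ be Weyl rationally almost periodic, i.e., for every ε > 0 there exists a periodic sequence y ∈ A^ℤ with d_W(x,y) < ε, where d_W(x,y) = limsup_{N→∞} sup_{ℓ ∈ ℤ} (1/N)|{ℓ ≤ n < ℓ+N : x(n) ≠ y(n)}|. Let X_x ⊆ A^ℤ be the orbit closure of x under the left shift S. Then for every bounded aperiodic sequence u : ℕ → ℂ, every continuous f : X_x → ℂ, and every z ∈ X_x, lim_{N→∞} (1/N) Σ_{n≤N} f(S^n z) u(n) = 0. -/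
open Filter Topology

/-- The left shift on a two-sided sequence space. -/
def shift {α : Type*} (x : ℤ → α) : ℤ → α := fun n => x (n + 1)

/-- The orbit closure of a point of a two-sided sequence space under the left shift
(the closure of the two-sided shift orbit). -/
def orbitClosure {α : Type*} [TopologicalSpace α] (x : ℤ → α) : Set (ℤ → α) :=
  closure (Set.range fun k : ℤ => fun n : ℤ => x (n + k))

/-- A sequence `y ∈ A^ℤ` is periodic if `S^q y = y` for some `q ≥ 1`. -/
def IsPeriodicSeq {α : Type*} (y : ℤ → α) : Prop :=
  ∃ q : ℕ, 1 ≤ q ∧ ∀ n : ℤ, y (n + q) = y n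

/-- The Weyl pseudo-metric distance between two points of `A^ℤ`:
`d_W(x,y) = limsup_N sup_ℓ (1/N) |{ℓ ≤ n < ℓ+N : x(n) ≠ y(n)}|`. -/
noncomputable def weylDist {α : Type*} (x y : ℤ → α) : ℝ :=
  Filter.limsup
    (fun N : ℕ => ⨆ ℓ : ℤ, (1 / N : ℝ) *
      ∑ n ∈ Finset.Ico ℓ (ℓ + N), Set.indicator {n : ℤ | x n ≠ y n} (fun _ => (1 : ℝ)) n)
    atTop

/-!
The orthogonality relation `∑ n ≤ N, v n * u n = o(N)` holds for periodic `v`, by splitting into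
residue classes, and for fixed bounded `u` it survives limits in the Besicovitch seminorm. So it
suffices that `n ↦ f (Sⁿ z)` is a Besicovitch limit of periodic sequences. Extend `f` to a
continuous function `F` on all of `A^ℤ`. If `y` is periodic and Weyl-close to `z`, then
`n ↦ F (Sⁿ y)` is periodic, and it is Besicovitch-close to `n ↦ F (Sⁿ z)` because, up to a small
error, `F` sees only finitely many coordinates. Finally, every `z ∈ X_x` has such approximants:
if `y` is Weyl-close to `x`, then each `S^k x` is Weyl-close to one of the finitely many translates
of `y`, and Weyl-closeness to a fixed sequence is a closed condition.
-/

open Asymptotics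

section AperiodicSequences

theorem tendsto_one_div_mul_iff_isLittleO {𝕜 : Type*} [RCLike 𝕜] {s : ℕ → 𝕜} :
    Tendsto (fun N : ℕ => (1 / (N : 𝕜)) * s N) atTop (𝓝 0) ↔
      s =o[atTop] (fun N : ℕ => (N : ℝ)) := by
  have hnorm : s =o[atTop] (fun N : ℕ => (N : ℝ)) ↔ s =o[atTop] (fun N : ℕ => (N : 𝕜)) := by
    rw [← isLittleO_norm_right, ← isLittleO_norm_right (g' := fun N : ℕ => (N : 𝕜))]
    simp only [RCLike.norm_natCast]
  rw [hnorm, isLittleO_iff_tendsto']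
  · simp only [one_div_mul_eq_div]
  · filter_upwards [eventually_ne_atTop 0] with N hN hN'
    exact absurd (Nat.cast_eq_zero.1 hN') hN

theorem isLittleO_natCast_of_norm_le {E : Type*} [SeminormedAddCommGroup E] {s : ℕ → E} {C : ℝ}
    (hs : ∀ n, ‖s n‖ ≤ C) : s =o[atTop] (fun N : ℕ => (N : ℝ)) := by
  have hO : s =O[atTop] (fun _ : ℕ => (1 : ℝ)) :=
    .of_bound C (.of_forall fun n => by simpa using hs n)
  refine hO.trans_isLittleO (isLittleO_const_left.2 (.inr ?_))
  exact tendsto_norm_atTop_atTop.comp tendsto_natCast_atTop_atTop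

theorem isLittleO_natCast_of_dist_succ_le {E : Type*} [SeminormedAddCommGroup E] {s : ℕ → E}
    {C : ℝ} (hs : ∀ n, dist (s n) (s (n + 1)) ≤ C) {q : ℕ} (hq : 1 ≤ q)
    (h : (fun M : ℕ => s (q * (M + 1))) =o[atTop] (fun M : ℕ => (M : ℝ))) :
    s =o[atTop] (fun N : ℕ => (N : ℝ)) := by
  have hmul : (fun N : ℕ => s (q * (N / q + 1))) =o[atTop] (fun N : ℕ => (N : ℝ)) := by
    refine (h.comp_tendsto (Nat.tendsto_div_const_atTop (by omega : q ≠ 0))).trans_isBigO ?_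
    refine .of_norm_le fun N => ?_
    simpa using Nat.div_le_self N q
  have hdiff : (fun N : ℕ => s N - s (q * (N / q + 1))) =o[atTop] (fun N : ℕ => (N : ℝ)) := by
    refine isLittleO_natCast_of_norm_le (C := q * C) fun N => ?_
    have hC : 0 ≤ C := dist_nonneg.trans (hs 0)
    have hlt : N < q * (N / q + 1) := Nat.lt_mul_div_succ N (by omega)
    have hgap : q * (N / q + 1) - N ≤ q := by
      have := Nat.mul_div_le N q
      rw [mul_add]
      omega
    rw [← dist_eq_norm]
    refine (dist_le_Ico_sum_of_dist_le (f := s) (d := fun _ => C) hlt.le fun _ _ => hs _).trans ?_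
    rw [Finset.sum_const, Nat.card_Ico, nsmul_eq_mul]
    gcongr
  simpa using hdiff.add hmul

theorem sum_Icc_one_add {E : Type*} [AddCommMonoid E] (g : ℕ → E) (a b : ℕ) :
    ∑ n ∈ Finset.Icc 1 (a + b), g n =
      ∑ n ∈ Finset.Icc 1 a, g n + ∑ n ∈ Finset.Icc 1 b, g (a + n) := by
  induction b with
  | zero => simp
  | succ b ih =>
    rw [← add_assoc, Finset.sum_Icc_succ_top (by omega), Finset.sum_Icc_succ_top (by omega), ih,
      add_assoc, add_assoc]

theorem sum_Icc_one_mul_succ {E : Type*} [AddCommMonoid E] (g : ℕ → E) (q M : ℕ) :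
    ∑ n ∈ Finset.Icc 1 (q * (M + 1)), g n =
      ∑ r ∈ Finset.Icc 1 q, g r +
        ∑ r ∈ Finset.Icc 1 q, ∑ m ∈ Finset.Icc 1 M, g (q * m + r) := by
  induction M with
  | zero => simp
  | succ M ih =>
    rw [mul_add_one q (M + 1), sum_Icc_one_add, ih, add_assoc, ← Finset.sum_add_distrib]
    simp only [Finset.sum_Icc_succ_top (Nat.le_add_left 1 M)]

/-- Aperiodic sequences: the averages along every arithmetic progression tend to zero. This is
phrased as `∑ = o(M)`, so that it makes sense for values in any normed group. -/
def IsAperiodic {E : Type*} [Norm E] [AddCommMonoid E] (u : ℕ → E) : Prop :=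
  ∀ a b : ℕ, 1 ≤ a →
    (fun M : ℕ => ∑ m ∈ Finset.Icc 1 M, u (a * m + b)) =o[atTop] (fun M : ℕ => (M : ℝ))

theorem exists_norm_le_of_periodic {E : Type*} [SeminormedAddCommGroup E] {v : ℕ → E} {q : ℕ}
    (hq : 1 ≤ q) (hv : Function.Periodic v q) : ∃ B, ∀ n, ‖v n‖ ≤ B := by
  refine ⟨∑ r ∈ Finset.range q, ‖v r‖, fun n => ?_⟩
  rw [← hv.map_mod_nat n]
  exact Finset.single_le_sum (f := fun r => ‖v r‖) (fun _ _ => norm_nonneg _)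
    (Finset.mem_range.2 (Nat.mod_lt n hq))

variable {R : Type*} [SeminormedRing R] {u v : ℕ → R} {C : ℝ}

theorem IsAperiodic.isLittleO_sum_mul_of_periodic (haper : IsAperiodic u) (hu : ∀ n, ‖u n‖ ≤ C)
    {q : ℕ} (hq : 1 ≤ q) (hv : Function.Periodic v q) :
    (fun N : ℕ => ∑ n ∈ Finset.Icc 1 N, v n * u n) =o[atTop] (fun N : ℕ => (N : ℝ)) := by
  obtain ⟨B, hB⟩ := exists_norm_le_of_periodic hq hv
  have hsucc (n : ℕ) : dist (∑ k ∈ Finset.Icc 1 n, v k * u k)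
      (∑ k ∈ Finset.Icc 1 (n + 1), v k * u k) ≤ B * C := by
    rw [Finset.sum_Icc_succ_top (by omega), dist_self_add_right]
    exact norm_mul_le_of_le (hB _) (hu _)
  have hresidues (M : ℕ) : ∑ n ∈ Finset.Icc 1 (q * (M + 1)), v n * u n =
      ∑ r ∈ Finset.Icc 1 q, v r * u r +
        ∑ r ∈ Finset.Icc 1 q, v r * ∑ m ∈ Finset.Icc 1 M, u (q * m + r) := by
    have hvr (m r : ℕ) : v (q * m + r) = v r := by
      rw [add_comm, mul_comm]
      exact hv.nat_mul m r
    simp_rw [sum_Icc_one_mul_succ, hvr, Finset.mul_sum]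
  refine isLittleO_natCast_of_dist_succ_le hsucc hq ?_
  simp_rw [hresidues]
  exact (isLittleO_natCast_of_norm_le fun _ => le_rfl).add
    (.fun_sum fun r _ => (haper q r hq).const_mul_left (v r))

/-- Besicovitch rationally almost periodic sequences: limits of periodic sequences for the
Besicovitch pseudometric, the upper mean of pointwise distances over positive times. -/
def IsBesicovitchRAP {E : Type*} [PseudoMetricSpace E] (v : ℕ → E) : Prop :=
  ∀ ε : ℝ, 0 < ε → ∃ p : ℕ → E, (∃ q : ℕ, 1 ≤ q ∧ Function.Periodic p q) ∧
    ∀ᶠ N : ℕ in atTop, ∑ n ∈ Finset.Icc 1 N, dist (v n) (p n) ≤ ε * N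

theorem IsBesicovitchRAP.isLittleO_sum_mul (hv : IsBesicovitchRAP v) (haper : IsAperiodic u)
    (hu : ∀ n, ‖u n‖ ≤ C) :
    (fun N : ℕ => ∑ n ∈ Finset.Icc 1 N, v n * u n) =o[atTop] (fun N : ℕ => (N : ℝ)) := by
  have hC : 0 ≤ C := (norm_nonneg _).trans (hu 0)
  refine isLittleO_iff.2 fun c hc => ?_
  obtain ⟨ε, hε, hCε⟩ := exists_pos_mul_lt (half_pos hc) C
  obtain ⟨p, ⟨q, hq, hp⟩, hvp⟩ := hv ε hε
  have hpu := isLittleO_iff.1 (haper.isLittleO_sum_mul_of_periodic hu hq hp) (half_pos hc)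
  filter_upwards [hvp, hpu] with N hvpN hpuN
  rw [Real.norm_natCast] at hpuN ⊢
  have hclose : ‖∑ n ∈ Finset.Icc 1 N, (v n - p n) * u n‖ ≤ c / 2 * N := calc
    _ ≤ ∑ n ∈ Finset.Icc 1 N, dist (v n) (p n) * C :=
      norm_sum_le_of_le _ fun n _ => norm_mul_le_of_le (dist_eq_norm _ _).ge (hu n)
    _ = C * ∑ n ∈ Finset.Icc 1 N, dist (v n) (p n) := by rw [← Finset.sum_mul, mul_comm]
    _ ≤ C * (ε * N) := by gcongr
    _ = C * ε * N := (mul_assoc _ _ _).symm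
    _ ≤ c / 2 * N := by gcongr
  calc ‖∑ n ∈ Finset.Icc 1 N, v n * u n‖
      = ‖∑ n ∈ Finset.Icc 1 N, (v n - p n) * u n + ∑ n ∈ Finset.Icc 1 N, p n * u n‖ := by
        simp only [← Finset.sum_add_distrib, ← add_mul, sub_add_cancel]
    _ ≤ c / 2 * N + c / 2 * N := norm_add_le_of_le hclose hpuN
    _ = c * N := by ring

end AperiodicSequences

section Shift

variable {α : Type*}

theorem shift_iterate_apply (x : ℤ → α) (n : ℕ) (j : ℤ) : shift^[n] x j = x (j + n) := by
  induction n generalizing j with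
  | zero => simp
  | succ n ih =>
    rw [Function.iterate_succ_apply', shift, ih]
    congr 1
    push_cast
    ring

theorem mapsTo_shift_orbitClosure [TopologicalSpace α] (x : ℤ → α) :
    Set.MapsTo shift (orbitClosure x) (orbitClosure x) := by
  have hcont : Continuous (shift : (ℤ → α) → ℤ → α) :=
    continuous_pi fun n => continuous_apply (n + 1)
  refine Set.MapsTo.closure ?_ hcont
  rintro _ ⟨k, rfl⟩
  exact ⟨k + 1, funext fun n => congrArg x (by ring)⟩

theorem IsPeriodicSeq.translate {y : ℤ → α} (hy : IsPeriodicSeq y) (k : ℤ) :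
    IsPeriodicSeq fun n => y (n + k) := by
  obtain ⟨q, hq, hper⟩ := hy
  exact ⟨q, hq, fun n => by simp only [add_right_comm n, hper]⟩

theorem IsPeriodicSeq.finite_range_translate {y : ℤ → α} (hy : IsPeriodicSeq y) :
    (Set.range fun k n : ℤ => y (n + k)).Finite := by
  obtain ⟨q, hq, hper⟩ := hy
  have htranslate : Function.Periodic (fun k n : ℤ => y (n + k)) (q : ℤ) :=
    fun k => funext fun n => by simp only [← add_assoc, hper]
  rw [← htranslate.image_Ioc (by omega) 0]
  exact (Set.finite_Ioc _ _).image _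

end Shift

section WeylDistance

variable {α : Type*} {x y z : ℤ → α}

/-- The number of places in the window `[ℓ, ℓ + N)` where `x` and `y` differ, as a real number;
its normalized supremum over `ℓ` is the quantity under the limsup in `weylDist`. -/
noncomputable def mismatchCount (x y : ℤ → α) (ℓ : ℤ) (N : ℕ) : ℝ :=
  ∑ n ∈ Finset.Ico ℓ (ℓ + N), Set.indicator {n : ℤ | x n ≠ y n} (fun _ => (1 : ℝ)) n

theorem mismatchCount_le (x y : ℤ → α) (ℓ : ℤ) (N : ℕ) : mismatchCount x y ℓ N ≤ N := by
  refine (Finset.sum_le_card_nsmul _ _ 1 fun n _ => ?_).trans (by simp)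
  exact Set.indicator_le_self' (fun _ _ => zero_le_one) n

theorem bddAbove_range_mismatchCount (x y : ℤ → α) (N : ℕ) :
    BddAbove (Set.range fun ℓ : ℤ => mismatchCount x y ℓ N) :=
  ⟨N, Set.forall_mem_range.2 fun ℓ => mismatchCount_le x y ℓ N⟩

theorem mismatchCount_translate (x y : ℤ → α) (k ℓ : ℤ) (N : ℕ) :
    mismatchCount (fun n => x (n + k)) (fun n => y (n + k)) ℓ N = mismatchCount x y (ℓ + k) N := by
  rw [mismatchCount, mismatchCount, add_right_comm, ← Finset.sum_Ico_add']
  rfl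

theorem weylDist_eq_limsup_iSup_mismatchCount (x y : ℤ → α) :
    weylDist x y = limsup (fun N : ℕ => (1 / N : ℝ) * ⨆ ℓ, mismatchCount x y ℓ N) atTop := by
  simp_rw [Real.mul_iSup_of_nonneg (one_div_nonneg.2 (Nat.cast_nonneg _))]
  rfl

theorem one_div_mul_iSup_mismatchCount_mem_Icc (x y : ℤ → α) (N : ℕ) :
    (1 / N : ℝ) * ⨆ ℓ, mismatchCount x y ℓ N ∈ Set.Icc (0 : ℝ) 1 := by
  have hnonneg : 0 ≤ ⨆ ℓ, mismatchCount x y ℓ N :=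
    Real.iSup_nonneg fun ℓ => Finset.sum_nonneg fun n _ => Set.indicator_nonneg (by simp) n
  refine ⟨by positivity, ?_⟩
  rw [one_div_mul_eq_div]
  exact div_le_one_of_le₀ (ciSup_le fun ℓ => mismatchCount_le x y ℓ N) N.cast_nonneg

theorem eventually_mismatchCount_le_of_weylDist_lt {δ : ℝ} (h : weylDist x y < δ) :
    ∀ᶠ N : ℕ in atTop, ∀ ℓ, mismatchCount x y ℓ N ≤ δ * N := by
  rw [weylDist_eq_limsup_iSup_mismatchCount] at h
  filter_upwards [eventually_gt_atTop 0, eventually_lt_of_limsup_lt h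
    (isBoundedUnder_of ⟨1, fun N => (one_div_mul_iSup_mismatchCount_mem_Icc x y N).2⟩)]
    with N hN hlt ℓ
  rw [one_div_mul_eq_div, div_lt_iff₀ (Nat.cast_pos.2 hN)] at hlt
  exact (le_ciSup (bddAbove_range_mismatchCount x y N) ℓ).trans hlt.le

theorem weylDist_le_weylDist {x' y' : ℤ → α}
    (h : ∀ N ℓ, mismatchCount x y ℓ N ≤ ⨆ ℓ', mismatchCount x' y' ℓ' N) :
    weylDist x y ≤ weylDist x' y' := by
  simp only [weylDist_eq_limsup_iSup_mismatchCount]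
  refine limsup_le_limsup (.of_forall fun N => ?_)
    (isCoboundedUnder_le_of_le atTop fun N => (one_div_mul_iSup_mismatchCount_mem_Icc x y N).1)
    (isBoundedUnder_of ⟨1, fun N => (one_div_mul_iSup_mismatchCount_mem_Icc x' y' N).2⟩)
  exact mul_le_mul_of_nonneg_left (ciSup_le (h N)) (by positivity)

theorem lowerSemicontinuous_mismatchCount [TopologicalSpace α] [T1Space α] (y : ℤ → α) (ℓ : ℤ)
    (N : ℕ) : LowerSemicontinuous fun x => mismatchCount x y ℓ N := by
  refine lowerSemicontinuous_sum fun n _ => ?_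
  have hopen : IsOpen {x : ℤ → α | x n ≠ y n} :=
    isOpen_compl_singleton.preimage (continuous_apply n)
  exact hopen.lowerSemicontinuous_indicator zero_le_one

theorem IsPeriodicSeq.exists_weylDist_translate_le [TopologicalSpace α] [T1Space α]
    (hy : IsPeriodicSeq y) (hz : z ∈ orbitClosure x) :
    ∃ k : ℤ, weylDist z (fun n => y (n + k)) ≤ weylDist x y := by
  set near : (ℤ → α) → Set (ℤ → α) :=
    fun y' => {w | ∀ N ℓ, mismatchCount w y' ℓ N ≤ ⨆ ℓ', mismatchCount x y ℓ' N}
  have hclosed : IsClosed (⋃ y' ∈ Set.range fun k n : ℤ => y (n + k), near y') := by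
    refine hy.finite_range_translate.isClosed_biUnion fun y' _ => ?_
    simp only [near, Set.ofPred_forall]
    exact isClosed_iInter fun N => isClosed_iInter fun ℓ =>
      (lowerSemicontinuous_mismatchCount y' ℓ N).isClosed_preimage _
  have horbit : (Set.range fun k n : ℤ => x (n + k)) ⊆
      ⋃ y' ∈ Set.range fun k n : ℤ => y (n + k), near y' := by
    rintro _ ⟨k, rfl⟩
    refine Set.mem_biUnion (Set.mem_range_self k) fun N ℓ => ?_
    rw [mismatchCount_translate]
    exact le_ciSup (bddAbove_range_mismatchCount x y N) (ℓ + k)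
  obtain ⟨_, ⟨k, rfl⟩, hk⟩ := Set.mem_iUnion₂.1 (closure_minimal horbit hclosed hz)
  exact ⟨k, weylDist_le_weylDist hk⟩

/-- Weyl rationally almost periodic sequences: limits of periodic sequences (over the same
alphabet) for the Weyl pseudometric. -/
def IsWeylRAP (x : ℤ → α) : Prop :=
  ∀ ε : ℝ, 0 < ε → ∃ y : ℤ → α, IsPeriodicSeq y ∧ weylDist x y < ε

theorem IsWeylRAP.of_mem_orbitClosure [TopologicalSpace α] [T1Space α] (hx : IsWeylRAP x)
    (hz : z ∈ orbitClosure x) : IsWeylRAP z := by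
  intro ε hε
  obtain ⟨y, hy, hxy⟩ := hx ε hε
  obtain ⟨k, hk⟩ := hy.exists_weylDist_translate_le hz
  exact ⟨_, hy.translate k, hk.trans_lt hxy⟩

end WeylDistance

section ContinuousObservables

theorem exists_finset_dist_lt_of_forall_eq {ι : Type*} {X : ι → Type*}
    [∀ i, TopologicalSpace (X i)] [∀ i, CompactSpace (X i)] {E : Type*} [PseudoMetricSpace E]
    (F : C(∀ i, X i, E)) {ε : ℝ} (hε : 0 < ε) :
    ∃ s : Finset ι, ∀ w w', (∀ i ∈ s, w i = w' i) → dist (F w) (F w') < ε := by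
  have hbox (w : ∀ i, X i) : ∃ (I : Finset ι) (U : ∀ i, Set (X i)),
      (∀ i ∈ I, IsOpen (U i) ∧ w i ∈ U i) ∧
        (I : Set ι).pi U ⊆ F ⁻¹' Metric.ball (F w) (ε / 2) :=
    isOpen_pi_iff.1 (Metric.isOpen_ball.preimage F.continuous) w
      (Metric.mem_ball_self (half_pos hε))
  choose I U hU hball using hbox
  obtain ⟨t, -, ht⟩ := isCompact_univ.elim_nhds_subcover (fun w => (I w : Set ι).pi (U w))
    fun w _ => set_pi_mem_nhds (I w).finite_toSet fun i hi => (hU w i hi).1.mem_nhds (hU w i hi).2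
  classical
  refine ⟨t.biUnion I, fun w w' hww' => ?_⟩
  obtain ⟨v, hv, hwv⟩ := Set.mem_iUnion₂.1 (ht (Set.mem_univ w))
  have hwv' : w' ∈ (I v : Set ι).pi (U v) := fun i hi =>
    hww' i (Finset.mem_biUnion.2 ⟨v, hv, hi⟩) ▸ hwv i hi
  calc dist (F w) (F w') ≤ dist (F w) (F v) + dist (F w') (F v) := dist_triangle_right _ _ _
    _ < ε / 2 + ε / 2 := add_lt_add (hball v hwv) (hball v hwv')
    _ = ε := add_halves ε

theorem exists_finset_dist_le_add_mul_sum_indicator {ι : Type*} {X : ι → Type*}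
    [∀ i, TopologicalSpace (X i)] [∀ i, CompactSpace (X i)] {E : Type*} [PseudoMetricSpace E]
    (F : C(∀ i, X i, E)) {ε : ℝ} (hε : 0 < ε) :
    ∃ (s : Finset ι) (C : ℝ), 0 ≤ C ∧ ∀ w w', dist (F w) (F w') ≤
      ε + C * ∑ i ∈ s, Set.indicator {i | w i ≠ w' i} (fun _ => (1 : ℝ)) i := by
  obtain ⟨s, hs⟩ := exists_finset_dist_lt_of_forall_eq F hε
  obtain ⟨C, hC⟩ := Metric.isBounded_range_iff.1 (isCompact_range F.continuous).isBounded
  refine ⟨s, max C 0, le_max_right _ _, fun w w' => ?_⟩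
  have hind (i : ι) : 0 ≤ Set.indicator {i | w i ≠ w' i} (fun _ => (1 : ℝ)) i :=
    Set.indicator_nonneg (by simp) i
  by_cases hww' : ∀ i ∈ s, w i = w' i
  · exact (hs w w' hww').le.trans (le_add_of_nonneg_right
      (mul_nonneg (le_max_right _ _) (Finset.sum_nonneg fun i _ => hind i)))
  · push Not at hww'
    obtain ⟨i, hi, hne⟩ := hww'
    have hone : 1 ≤ ∑ i ∈ s, Set.indicator {i | w i ≠ w' i} (fun _ => (1 : ℝ)) i :=
      (Set.indicator_of_mem (s := {i | w i ≠ w' i}) hne fun _ => (1 : ℝ)).ge.trans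
        (Finset.single_le_sum (fun i _ => hind i) hi)
    calc dist (F w) (F w') ≤ max C 0 := (hC w w').trans (le_max_left _ _)
      _ ≤ max C 0 * ∑ i ∈ s, Set.indicator {i | w i ≠ w' i} (fun _ => (1 : ℝ)) i :=
        le_mul_of_one_le_right (le_max_right _ _) hone
      _ ≤ _ := le_add_of_nonneg_left hε.le

variable {α : Type*}

theorem sum_indicator_shift_iterate_eq_mismatchCount (x y : ℤ → α) (i : ℤ) (N : ℕ) :
    ∑ n ∈ Finset.Icc 1 N,
        Set.indicator {j | shift^[n] x j ≠ shift^[n] y j} (fun _ => (1 : ℝ)) i =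
      mismatchCount x y (i + 1) N := by
  have hwindow : Finset.Ico (i + 1) (i + 1 + N) =
      (Finset.Icc 1 N).image fun n : ℕ => i + (n : ℤ) := by
    ext k
    simp only [Finset.mem_Ico, Finset.mem_image, Finset.mem_Icc]
    exact ⟨fun hk => ⟨(k - i).toNat, by omega, by omega⟩, by rintro ⟨n, hn, rfl⟩; omega⟩
  rw [mismatchCount, hwindow, Finset.sum_image fun _ _ _ _ h => by simpa using h]
  simp only [shift_iterate_apply]
  rfl

theorem IsPeriodicSeq.exists_periodic_comp_shift_iterate {β : Type*} {y : ℤ → α}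
    (hy : IsPeriodicSeq y) (F : (ℤ → α) → β) :
    ∃ q : ℕ, 1 ≤ q ∧ Function.Periodic (fun n : ℕ => F (shift^[n] y)) q := by
  obtain ⟨q, hq, hper⟩ := hy
  refine ⟨q, hq, fun n => congrArg F (funext fun j => ?_)⟩
  rw [shift_iterate_apply, shift_iterate_apply, Nat.cast_add, ← add_assoc, hper]

theorem IsWeylRAP.isBesicovitchRAP_comp_shift_iterate [TopologicalSpace α] [CompactSpace α]
    {E : Type*} [PseudoMetricSpace E] {x : ℤ → α} (hx : IsWeylRAP x) (F : C(ℤ → α, E)) :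
    IsBesicovitchRAP fun n => F (shift^[n] x) := by
  intro ε hε
  obtain ⟨s, C, hC, hF⟩ := exists_finset_dist_le_add_mul_sum_indicator F (half_pos hε)
  obtain ⟨δ, hδ, hCδ⟩ := exists_pos_mul_lt (half_pos hε) (C * s.card)
  obtain ⟨y, hy, hxy⟩ := hx δ hδ
  refine ⟨fun n => F (shift^[n] y), hy.exists_periodic_comp_shift_iterate F, ?_⟩
  filter_upwards [eventually_mismatchCount_le_of_weylDist_lt hxy] with N hN
  calc ∑ n ∈ Finset.Icc 1 N, dist (F (shift^[n] x)) (F (shift^[n] y))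
      ≤ ∑ n ∈ Finset.Icc 1 N, (ε / 2 + C * ∑ i ∈ s,
          Set.indicator {j | shift^[n] x j ≠ shift^[n] y j} (fun _ => (1 : ℝ)) i) :=
        Finset.sum_le_sum fun n _ => hF _ _
    _ = ε / 2 * N + C * ∑ i ∈ s, mismatchCount x y (i + 1) N := by
        rw [Finset.sum_add_distrib, ← Finset.mul_sum, Finset.sum_comm]
        simp [sum_indicator_shift_iterate_eq_mismatchCount, mul_comm]
    _ ≤ ε / 2 * N + C * (s.card * (δ * N)) := by
        gcongr
        exact (Finset.sum_le_card_nsmul _ _ _ fun i _ => hN _).trans_eq (nsmul_eq_mul _ _)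
    _ = ε / 2 * N + C * s.card * δ * N := by ring
    _ ≤ ε / 2 * N + ε / 2 * N := by gcongr
    _ = ε * N := by ring

end ContinuousObservables

universe v w

theorem wrap_orthogonal_to_aperiodic_general {α : Type v} [TopologicalSpace α] [CompactSpace α]
    [T2Space α] {R : Type w} [SeminormedRing R] [TietzeExtension.{v, w} R] {x : ℤ → α}
    (hx : IsWeylRAP x) {u : ℕ → R} {C : ℝ} (hu : ∀ n, ‖u n‖ ≤ C) (haper : IsAperiodic u)
    (f : C(orbitClosure x, R)) (z : orbitClosure x) :
    (fun N : ℕ => ∑ n ∈ Finset.Icc 1 N,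
        f (((mapsTo_shift_orbitClosure x).restrict shift _ _)^[n] z) * u n)
      =o[atTop] (fun N : ℕ => (N : ℝ)) := by
  obtain ⟨F, hF⟩ := f.exists_restrict_eq isClosed_closure
  have hf (w : orbitClosure x) : f w = F w := (DFunLike.congr_fun hF w).symm
  have hz : IsBesicovitchRAP fun n => F (shift^[n] z) :=
    (hx.of_mem_orbitClosure z.2).isBesicovitchRAP_comp_shift_iterate F
  simpa only [hf, Set.MapsTo.coe_iterate_restrict] using hz.isLittleO_sum_mul haper hu

/-- If `A ⊂ ℂ` is finite and `x ∈ A^ℤ` is Weyl rationally almost periodic, then the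
subshift `X_x` given by the orbit closure of `x` is orthogonal to every bounded
aperiodic sequence `u : ℕ → ℂ`. -/
theorem wrap_orthogonal_to_aperiodic (A : Set ℂ) (hA : A.Finite) (x : ℤ → ↥A)
    (hwrap : ∀ ε : ℝ, 0 < ε → ∃ y : ℤ → ↥A, IsPeriodicSeq y ∧ weylDist x y < ε)
    (hinv : Set.MapsTo shift (orbitClosure x) (orbitClosure x))
    (u : ℕ → ℂ) (Cu : ℝ) (hu : ∀ n : ℕ, ‖u n‖ ≤ Cu)
    (haper : ∀ a b : ℕ, 1 ≤ a →
      Tendsto (fun M : ℕ => (1 / (M : ℂ)) * ∑ m ∈ Finset.Icc 1 M, u (a * m + b))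
        atTop (nhds 0)) :
    ∀ (f : C(orbitClosure x, ℂ)) (z : orbitClosure x),
      Tendsto
        (fun N : ℕ => (1 / (N : ℂ)) *
          ∑ n ∈ Finset.Icc 1 N,
            f ((Set.MapsTo.restrict shift (orbitClosure x) (orbitClosure x) hinv)^[n] z)
              * u n)
        atTop (nhds 0) := by
  have : Finite A := hA
  exact fun f z => tendsto_one_div_mul_iff_isLittleO.2 <|
    wrap_orthogonal_to_aperiodic_general hwrap hu
      (fun a b ha => tendsto_one_div_mul_iff_isLittleO.1 (haper a b ha)) f z
end
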